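/- arXiv:1505.00980 — 4 statements merged into one kernel-verified Lean document; each statement's English description precedes it below -/
import Mathlib

section
/- Fix a nonempty proper subset A of S, a function F ∈ 𝓓_A, and set B := Aᶜ. For every ε > 0 there exists H ∈ 𝓓_S such that F(x) = H(x) and (𝔏F)(x) = (𝔏H)(x) for all x ∈ Λ_B(ε). Moreover, if in addition [F]_B has compact support contained in {x ∈ Σ_B : x_j > 0 for all j ∈ B}, then there exist ε > 0 and H ∈ 𝓓_S satisfying these two identities on Λ_B(ε) and such that H(x) = F(x) for all x ∈ Σ_{B,0}. -/
/-!
The function `H` is `F * Φ` with a cutoff `Φ` of class `C²` which is `1` near `Λ_B(ε)`, vanishes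
where some `x_k`, `k ∈ B`, is at most `η`, and satisfies `v_j · ∇Φ = 0` on each strip
`{x_j ≤ η}` of the simplex. The last property makes `H` inherit from `F` the conditions for
`j ∈ A`; those for `j ∉ A` hold because `H` vanishes where `x_j ≤ η`. If `[F]_B` vanishes
wherever some coordinate is below `ε₀`, then `F` vanishes at the points of `Σ_{B,0}` outside
`Λ_B(ε₀)`, hence so does `H`, and `ε = ε₀` serves (`eq_zero_of_FB`).

The cutoff is a product over `k ∈ B` of cutoffs of one coordinate `x_k`
(`exists_cutoff_coord`). A linear function `x ↦ Σ_i u_i x_i` has `v_j`-derivative `(𝓛u)(j)`.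
Take `w` strictly subharmonic off `k` and close to the indicator of `k`, and for each `D` not
containing `k` let `u_D` be harmonic on `D` and equal to `w` off `D`. Then `ℓ_D = Σ_i u_D(i) x_i`
is annihilated by `v_j · ∇` for `j ∈ D`, and `u_D` is strictly increasing in `D`
(`exists_harmonic_family`). The lower envelope `min_D (ℓ_D - κ K^|D|)` is close to `x_k`, and
if `K` is large its near-minimisers `D` at `x` contain every `j ≠ k` with `x_j ≤ κ`
(`mem_of_near_min`). In place of a smooth cutoff of this minimum, the product over `D` of smooth
steps in `ℓ_D - κ K^|D|` is used: the terms of its gradient that are nonzero come from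
near-minimisers only.
-/

open MeasureTheory Set
open scoped NNReal ENNReal

noncomputable section

variable {S : Type*} [Fintype S] [DecidableEq S]

/-- The generator of the underlying Markov chain. -/
def gen (r : S → S → ℝ) (f : S → ℝ) (j : S) : ℝ := ∑ k, r j k * (f k - f j)

/-- Irreducibility of the jump rates. -/
def IrreducibleRates (r : S → S → ℝ) : Prop :=
  ∀ j k : S, j ≠ k → Relation.TransGen (fun a c => 0 < r a c) j k

/-- canonical basis vector of ℝ^S -/
def ebasis (j : S) : S → ℝ := Pi.single j 1

/-- the vectors v_j = Σ_k r(j,k)(e_k - e_j) -/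
def vvec (r : S → S → ℝ) (j : S) : S → ℝ := ∑ k, r j k • (ebasis k - ebasis j)

/-- second directional derivative (∂_d)² H (x) -/
def secondD (H : (S → ℝ) → ℝ) (d x : S → ℝ) : ℝ :=
  fderiv ℝ (fun y => fderiv ℝ H y d) x d

/-- membership in the class 𝓓_j -/
def memD (r : S → S → ℝ) (j : S) (H : (S → ℝ) → ℝ) : Prop :=
  ContDiff ℝ 2 H ∧
  ContinuousOn (fun x => if 0 < x j then fderiv ℝ H x (vvec r j) / x j else 0)
    (stdSimplex ℝ S)

/-- the operator 𝔏 -/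
def Lop (r : S → S → ℝ) (m : S → ℝ) (b : ℝ) (H : (S → ℝ) → ℝ) (x : S → ℝ) : ℝ :=
  b * ∑ j, (if x j ≠ 0 then (m j / x j) * fderiv ℝ H x (vvec r j) else 0)
    + (1 / 2) * ∑ j, ∑ k, m j * r j k * secondD H (ebasis k - ebasis j) x

/-- the path space C(ℝ₊, Σ) -/
abbrev PathSp (S : Type*) [Fintype S] := C(ℝ≥0, ↥(stdSimplex ℝ S))

instance : MeasurableSpace (PathSp S) := borel _

/-- the natural filtration 𝓕_t = σ(X_s : s ≤ t) -/
def filtr (S : Type*) [Fintype S] (t : ℝ≥0) : MeasurableSpace (PathSp S) :=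
  ⨆ s ∈ Set.Iic t,
    MeasurableSpace.comap (fun ω : PathSp S => ((ω s : S → ℝ))) inferInstance

/-- the martingale property with respect to the natural filtration -/
def IsMartingale (μ : Measure (PathSp S)) (M : ℝ≥0 → PathSp S → ℝ) : Prop :=
  (∀ t, Integrable (M t) μ) ∧
  (∀ t, @Measurable _ _ (filtr S t) _ (M t)) ∧
  (∀ s t : ℝ≥0, s ≤ t → ∀ A : Set (PathSp S), MeasurableSet[filtr S s] A →
    ∫ ω in A, M t ω ∂μ = ∫ ω in A, M s ω ∂μ)

/-- the process H(X_t) - ∫₀ᵗ (𝔏H)(X_s) ds -/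
def martProc (r : S → S → ℝ) (m : S → ℝ) (b : ℝ) (H : (S → ℝ) → ℝ)
    (t : ℝ≥0) (ω : PathSp S) : ℝ :=
  H (ω t : S → ℝ) - ∫ s in Set.Icc (0:ℝ) (t:ℝ), Lop r m b H ((ω s.toNNReal : S → ℝ))

/-- μ is a solution of the 𝔏-martingale problem -/
def SolvesMP (r : S → S → ℝ) (m : S → ℝ) (b : ℝ) (μ : Measure (PathSp S)) : Prop :=
  ∀ H : (S → ℝ) → ℝ, (∀ j : S, memD r j H) → IsMartingale μ (martProc r m b H)

/-- μ starts at x -/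
def StartsAt (μ : Measure (PathSp S)) (x : S → ℝ) : Prop :=
  μ {ω : PathSp S | (ω 0 : S → ℝ) = x} = 1
/-- u k is the 𝓛-harmonic extension of the indicator of k on B -/
def HarmonicExt (r : S → S → ℝ) (B : Finset S) (u : S → S → ℝ) : Prop :=
  ∀ k ∈ B, (∀ j ∈ B, u k j = if j = k then 1 else 0) ∧ (∀ j ∉ B, gen r (u k) j = 0)

/-- the trace jump rates r^B, expressed via the harmonic extensions u -/
def traceR (r : S → S → ℝ) (u : S → S → ℝ) (j k : S) : ℝ :=
  if j = k then 0 else ∑ ℓ, r j ℓ * u k ℓ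

/-- the vectors v_j^B in ℝ^B -/
def vvecB (rB : S → S → ℝ) (B : Finset S) (j : ↥B) : ↥B → ℝ :=
  ∑ k : ↥B, rB j.1 k.1 • ((Pi.single k 1 : ↥B → ℝ) - Pi.single j 1)

/-- the operator 𝔏_B acting on C²(Σ_B) -/
def LopB (rB : S → S → ℝ) (m : S → ℝ) (b : ℝ) (B : Finset S)
    (h : (↥B → ℝ) → ℝ) (x : ↥B → ℝ) : ℝ :=
  b * ∑ j : ↥B, (if 0 < x j then (m j.1 / x j) * fderiv ℝ h x (vvecB rB B j) else 0)
    + (1 / 2) * ∑ j : ↥B, ∑ k : ↥B, m j.1 * rB j.1 k.1 *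
        fderiv ℝ (fun y => fderiv ℝ h y ((Pi.single k 1 : ↥B → ℝ) - Pi.single j 1)) x
          ((Pi.single k 1 : ↥B → ℝ) - Pi.single j 1)

/-- extension of x ∈ ℝ^B by zero to ℝ^S -/
def inclB (B : Finset S) (x : ↥B → ℝ) : S → ℝ :=
  fun j => if h : j ∈ B then x ⟨j, h⟩ else 0

/-- restriction of the coordinates to B -/
def restB (B : Finset S) (y : S → ℝ) : ↥B → ℝ := fun j => y j.1

open Classical in
/-- the function [F]_B -/
def FB (B : Finset S) (F : (S → ℝ) → ℝ) (x : ↥B → ℝ) : ℝ :=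
  if ∀ j, 0 < x j then F (inclB B x) else 0


/-! ### The discrete Dirichlet problem -/

lemma gen_add (r : S → S → ℝ) (f g : S → ℝ) (j : S) :
    gen r (f + g) j = gen r f j + gen r g j := by
  simp only [gen, Pi.add_apply, ← Finset.sum_add_distrib]
  exact Finset.sum_congr rfl fun k _ => by ring

lemma gen_smul (r : S → S → ℝ) (c : ℝ) (f : S → ℝ) (j : S) :
    gen r (c • f) j = c * gen r f j := by
  simp only [gen, Pi.smul_apply, smul_eq_mul, Finset.mul_sum]
  exact Finset.sum_congr rfl fun k _ => by ring

lemma gen_sub (r : S → S → ℝ) (f g : S → ℝ) (j : S) :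
    gen r (f - g) j = gen r f j - gen r g j := by
  simp only [gen, Pi.sub_apply, ← Finset.sum_sub_distrib]
  exact Finset.sum_congr rfl fun k _ => by ring

lemma gen_nonneg_of_min {r : S → S → ℝ} (hr : ∀ j k, 0 ≤ r j k) {d : S → ℝ} {i : S}
    (h : ∀ k, d i ≤ d k) : 0 ≤ gen r d i :=
  Finset.sum_nonneg fun k _ => mul_nonneg (hr i k) (sub_nonneg.2 (h k))

/-- Minimum principle: a function that is superharmonic on a proper subset `D` and nonnegative
off `D` is nonnegative. -/
lemma min_principle {r : S → S → ℝ} (hr : ∀ j k, 0 ≤ r j k) (hirr : IrreducibleRates r)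
    {k : S} {D : Finset S} (hk : k ∉ D) {u : S → ℝ} (h0 : ∀ j ∉ D, 0 ≤ u j)
    (h1 : ∀ j ∈ D, gen r u j ≤ 0) (j : S) : 0 ≤ u j := by
  obtain ⟨i, -, hi⟩ := Finset.exists_min_image Finset.univ u ⟨k, Finset.mem_univ k⟩
  by_contra! hneg
  have hineg : u i < 0 := (hi j (Finset.mem_univ j)).trans_lt hneg
  -- the set of minimisers is closed under jumps of positive rate
  have step : ∀ a c, u a = u i → 0 < r a c → u c = u i := by
    intro a c ha hac
    have haD : a ∈ D := by
      by_contra h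
      linarith [h0 a h]
    have hnn : ∀ l ∈ Finset.univ, 0 ≤ r a l * (u l - u a) := fun l _ =>
      mul_nonneg (hr a l) (by linarith [hi l (Finset.mem_univ l)])
    have hz := (Finset.sum_eq_zero_iff_of_nonneg hnn).1
      (le_antisymm (h1 a haD) (Finset.sum_nonneg hnn)) c (Finset.mem_univ c)
    rcases mul_eq_zero.1 hz with h | h <;> linarith
  have hik : i ≠ k := by
    rintro rfl
    linarith [h0 i hk]
  have hall : ∀ c, Relation.TransGen (fun a c => 0 < r a c) i c → u c = u i := by
    intro c hc
    induction hc with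
    | single h => exact step _ _ rfl h
    | tail _ h ih => exact step _ _ ih h
  linarith [h0 k hk, hall k (hirr i k hik)]

/-- Solvability of the Dirichlet problem `𝓛u = ρ` on `D`, `u = w` off `D`, for `D` proper. -/
lemma exists_dirichlet {r : S → S → ℝ} (hr : ∀ j k, 0 ≤ r j k) (hirr : IrreducibleRates r)
    {k : S} {D : Finset S} (hk : k ∉ D) (w ρ : S → ℝ) :
    ∃ u : S → ℝ, (∀ j ∉ D, u j = w j) ∧ ∀ j ∈ D, gen r u j = ρ j := by
  let T : (S → ℝ) →ₗ[ℝ] (S → ℝ) :=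
    { toFun := fun u j => if j ∈ D then gen r u j else u j
      map_add' := fun f g => by
        funext j
        by_cases h : j ∈ D <;> simp [h, gen_add]
      map_smul' := fun c f => by
        funext j
        by_cases h : j ∈ D <;> simp [h, gen_smul] }
  have hT : ∀ u j, T u j = if j ∈ D then gen r u j else u j := fun _ _ => rfl
  have hnn : ∀ u, T u = 0 → ∀ j, 0 ≤ u j := by
    intro u hu
    refine min_principle hr hirr hk (fun j hj => ?_) (fun j hj => ?_)
    · have := congrFun hu j
      rw [hT, if_neg hj] at this
      exact this.ge
    · have := congrFun hu j
      rw [hT, if_pos hj] at this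
      exact this.le
  have hinj : Function.Injective T := by
    refine (injective_iff_map_eq_zero T).2 fun u hu => ?_
    funext j
    have h2 := hnn (-u) (by rw [map_neg, hu, neg_zero]) j
    exact le_antisymm (by simpa using h2) (hnn u hu j)
  obtain ⟨u, hu⟩ := LinearMap.injective_iff_surjective.1 hinj
    (fun j => if j ∈ D then ρ j else w j)
  refine ⟨u, fun j hj => ?_, fun j hj => ?_⟩
  · have := congrFun hu j
    simpa only [hT, if_neg hj] using this
  · have := congrFun hu j
    simpa only [hT, if_pos hj] using this

/-- The family `u D` of harmonic replacements on `D` of a strictly subharmonic function `w` close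
to the indicator of `k`. It is strictly increasing in `D` in the quantitative sense of the third
and fourth clauses. -/
lemma exists_harmonic_family {r : S → S → ℝ} (hr : ∀ j k, 0 ≤ r j k)
    (hirr : IrreducibleRates r) (k : S) {ε : ℝ} (hε : 0 < ε) :
    ∃ (u : Finset S → S → ℝ) (a M : ℝ), 0 < a ∧ 0 < M ∧
      (∀ D, k ∉ D → ∀ j ∈ D, gen r (u D) j = 0) ∧
      (∀ D, k ∉ D → ∀ i ∈ D, (∀ l, u (D.erase i) l ≤ u D l) ∧ u (D.erase i) i + a ≤ u D i) ∧
      (∀ D, k ∉ D → ∀ j, j ∉ D → j ≠ k →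
        ∀ l, u (insert j D) l - u D l ≤ if l ∈ insert j D then M else 0) ∧
      (∀ D, k ∉ D → ∀ l, u ∅ l ≤ u D l) ∧
      (∀ l, |u ∅ l - (Pi.single k 1 : S → ℝ) l| ≤ ε) := by
  -- `q` is minus the expected hitting time of `k`
  obtain ⟨q, hq0, hq1⟩ := exists_dirichlet hr hirr (D := Finset.univ.erase k)
    (Finset.notMem_erase k _) 0 1
  obtain ⟨Q, hQ⟩ : ∃ Q : ℝ, ∀ l, |q l| ≤ Q := by
    obtain ⟨Q, hQ⟩ := (Set.finite_range fun l => |q l|).bddAbove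
    exact ⟨Q, fun l => hQ ⟨l, rfl⟩⟩
  have hQ0 : 0 ≤ Q := (abs_nonneg _).trans (hQ k)
  set θ : ℝ := ε / (Q + 1) with hθ
  have hθ0 : 0 < θ := by positivity
  set w : S → ℝ := Pi.single k 1 + θ • q with hw
  have hwsub : ∀ j, j ≠ k → 0 < gen r w j := by
    intro j hj
    rw [hw, gen_add, gen_smul, hq1 j (by simp [hj])]
    have : 0 ≤ gen r (Pi.single k 1 : S → ℝ) j := by
      refine gen_nonneg_of_min hr fun l => ?_
      rw [Pi.single_eq_of_ne hj]
      by_cases h : l = k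
      · subst h; simp
      · simp [h]
    simp only [Pi.one_apply, mul_one]
    linarith
  have hwk : ∀ l, |w l - (Pi.single k 1 : S → ℝ) l| ≤ ε := by
    intro l
    simp only [hw, Pi.add_apply, Pi.smul_apply, smul_eq_mul, add_sub_cancel_left, abs_mul,
      abs_of_pos hθ0]
    calc θ * |q l| ≤ θ * (Q + 1) := by gcongr; linarith [hQ l]
      _ = ε := by rw [hθ]; field_simp
  have hex : ∀ D : Finset S, ∃ v : S → ℝ, k ∉ D →
      (∀ j ∉ D, v j = w j) ∧ ∀ j ∈ D, gen r v j = 0 := by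
    intro D
    by_cases hD : k ∈ D
    · exact ⟨0, fun h => absurd hD h⟩
    · obtain ⟨v, h1, h2⟩ := exists_dirichlet hr hirr hD w 0
      exact ⟨v, fun _ => ⟨h1, fun j hj => h2 j hj⟩⟩
  choose u hu using hex
  have hu0 : u ∅ = w := funext fun j => (hu ∅ (by simp)).1 j (by simp)
  have hge : ∀ D, k ∉ D → ∀ l, w l ≤ u D l := by
    intro D hD l
    have := min_principle hr hirr hD (u := u D - w)
      (fun j hj => by simp [(hu D hD).1 j hj])
      (fun j hj => by
        rw [gen_sub, (hu D hD).2 j hj]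
        linarith [hwsub j (fun h => hD (h ▸ hj))]) l
    simpa using this
  -- at a boundary point `j ∉ D`, `u D` is still strictly subharmonic, as it lies above `w`
  have hsub : ∀ D, k ∉ D → ∀ j, j ∉ D → j ≠ k → 0 < gen r (u D) j := by
    intro D hD j hj hjk
    have h1 : 0 ≤ gen r (u D - w) j := gen_nonneg_of_min hr fun l => by
      simp only [Pi.sub_apply, (hu D hD).1 j hj, sub_self, sub_nonneg]
      exact hge D hD l
    rw [gen_sub] at h1
    linarith [hwsub j hjk]
  have hmono : ∀ D, k ∉ D → ∀ i ∈ D, ∀ l, u (D.erase i) l ≤ u D l := by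
    intro D hD i hi l
    have hD' : k ∉ D.erase i := fun h => hD (Finset.mem_of_mem_erase h)
    have := min_principle hr hirr hD (u := u D - u (D.erase i))
      (fun j hj => by
        simp [(hu D hD).1 j hj,
          (hu _ hD').1 j (fun h => hj (Finset.mem_of_mem_erase h))])
      (fun j hj => by
        rw [gen_sub, (hu D hD).2 j hj]
        by_cases hji : j = i
        · have := hsub _ hD' j (by simp [hji]) (fun h => hD (h ▸ hj))
          linarith
        · rw [(hu _ hD').2 j (by simp [hji, hj])]; simp) l
    simpa using this
  have hstrict : ∀ D, k ∉ D → ∀ i ∈ D, u (D.erase i) i < u D i := by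
    intro D hD i hi
    have hD' : k ∉ D.erase i := fun h => hD (Finset.mem_of_mem_erase h)
    refine lt_of_le_of_ne (hmono D hD i hi i) fun heq => ?_
    have h1 : 0 ≤ gen r (u D - u (D.erase i)) i := gen_nonneg_of_min hr fun l => by
      simp only [Pi.sub_apply, heq, sub_self, sub_nonneg]
      exact hmono D hD i hi l
    rw [gen_sub, (hu D hD).2 i hi] at h1
    linarith [hsub _ hD' i (by simp) (fun h => hD (h ▸ hi))]
  obtain ⟨a, ha0, ha⟩ : ∃ a : ℝ, 0 < a ∧
      ∀ D, k ∉ D → ∀ i ∈ D, u (D.erase i) i + a ≤ u D i := by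
    classical
    let f : Finset S × S → ℝ := fun p =>
      if k ∉ p.1 ∧ p.2 ∈ p.1 then u p.1 p.2 - u (p.1.erase p.2) p.2 else 1
    obtain ⟨p, -, hp⟩ := Finset.exists_min_image Finset.univ f ⟨(∅, k), Finset.mem_univ _⟩
    refine ⟨f p, ?_, fun D hD i hi => ?_⟩
    · by_cases h : k ∉ p.1 ∧ p.2 ∈ p.1
      · simp only [f, if_pos h]
        linarith [hstrict p.1 h.1 p.2 h.2]
      · simp only [f, if_neg h]; norm_num
    · have := hp (D, i) (Finset.mem_univ _)
      have h2 : f (D, i) = u D i - u (D.erase i) i := by simp [f, hD, hi]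
      linarith
  obtain ⟨M, hM⟩ : ∃ M : ℝ, ∀ D j l, u (insert j D) l - u D l ≤ M := by
    obtain ⟨M, hM⟩ := (Set.finite_range
      fun p : Finset S × S × S => u (insert p.2.1 p.1) p.2.2 - u p.1 p.2.2).bddAbove
    exact ⟨M, fun D j l => hM ⟨(D, j, l), rfl⟩⟩
  refine ⟨u, a, max M 1, ha0, by positivity, fun D hD j hj => (hu D hD).2 j hj,
    fun D hD i hi => ⟨hmono D hD i hi, ha D hD i hi⟩, fun D hD j hj hjk l => ?_,
    fun D hD l => hu0 ▸ hge D hD l, fun l => hu0 ▸ hwk l⟩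
  split_ifs with h
  · exact (hM D j l).trans (le_max_left _ _)
  · have hD' : k ∉ insert j D := by simp [hD, Ne.symm hjk]
    rw [(hu _ hD').1 l h, (hu D hD).1 l (fun h' => h (Finset.mem_insert_of_mem h'))]
    simp

/-! ### Cutoff functions -/

/-- The linear function `x ↦ Σ_i u i * x i`, as a continuous linear map. -/
def linF (u : S → ℝ) : (S → ℝ) →L[ℝ] ℝ := ∑ i, u i • ContinuousLinearMap.proj i

lemma linF_apply (u x : S → ℝ) : linF u x = ∑ i, u i * x i := by
  simp [linF]

lemma linF_vvec (r : S → S → ℝ) (u : S → ℝ) (j : S) : linF u (vvec r j) = gen r u j := by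
  have he : ∀ l, linF u (ebasis l) = u l := fun l => by
    simp [linF_apply, ebasis, Pi.single_apply]
  simp [vvec, gen, map_sum, he]

lemma deriv_smoothTransition_eq_zero {s : ℝ} (hs : s ≤ 0 ∨ 1 ≤ s) :
    deriv Real.smoothTransition s = 0 := by
  rcases hs with hs | hs
  · refine IsLocalMin.deriv_eq_zero (Filter.Eventually.of_forall fun t => ?_)
    rw [Real.smoothTransition.zero_of_nonpos hs]
    exact Real.smoothTransition.nonneg t
  · refine IsLocalMax.deriv_eq_zero (Filter.Eventually.of_forall fun t => ?_)
    rw [Real.smoothTransition.one_of_one_le hs]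
    exact Real.smoothTransition.le_one t

/-- The choice of offsets: with the penalties `-κ K ^ |D|`, a near-minimiser `D` of
`linF (u D) x - κ K ^ |D|` contains every `j ≠ k` with `x j ≤ κ`. Minimality against `D.erase i`
forces `x i` to be small for all `i ∈ D`; then adding `j` to `D` raises the linear part by less
than the gain in the penalty, if `K` is large. -/
lemma mem_of_near_min {k : S} {u : Finset S → S → ℝ} {a M κ K : ℝ} (ha : 0 < a) (hM : 0 < M)
    (hκ : 0 < κ) (hK : K = 3 + M + 2 * M * Fintype.card S / a)
    (h1 : ∀ D, k ∉ D → ∀ i ∈ D,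
      (∀ l, u (D.erase i) l ≤ u D l) ∧ u (D.erase i) i + a ≤ u D i)
    (h2 : ∀ D, k ∉ D → ∀ j, j ∉ D → j ≠ k →
        ∀ l, u (insert j D) l - u D l ≤ if l ∈ insert j D then M else 0)
    {x : S → ℝ} (hx : ∀ i, 0 ≤ x i) {D : Finset S} (hD : k ∉ D)
    (hmin : ∀ D', k ∉ D' → linF (u D) x - κ * K ^ D.card ≤
      linF (u D') x - κ * K ^ D'.card + κ)
    {j : S} (hjk : j ≠ k) (hj : x j ≤ κ) : j ∈ D := by
  by_contra hjD
  have hK1 : 1 ≤ K := by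
    rw [hK]
    have : 0 ≤ 2 * M * Fintype.card S / a := by positivity
    linarith
  set g := κ * K ^ D.card with hg
  have hgκ : κ ≤ g := le_mul_of_one_le_right hκ.le (one_le_pow₀ hK1)
  have hxi : ∀ i ∈ D, x i ≤ 2 * g / a := by
    intro i hi
    have hm := hmin (D.erase i) (fun h => hD (Finset.mem_of_mem_erase h))
    have hpos : 0 < κ * K ^ (D.erase i).card := by positivity
    have hdiff : a * x i ≤ linF (u D) x - linF (u (D.erase i)) x := by
      rw [linF_apply, linF_apply, ← Finset.sum_sub_distrib]
      calc a * x i ≤ u D i * x i - u (D.erase i) i * x i := by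
            nlinarith [(h1 D hD i hi).2, hx i]
        _ ≤ _ := Finset.single_le_sum
            (f := fun l => u D l * x l - u (D.erase i) l * x l) (fun l _ => by
              have := mul_le_mul_of_nonneg_right ((h1 D hD i hi).1 l) (hx l)
              linarith) (Finset.mem_univ i)
    rw [le_div_iff₀ ha]
    linarith
  have hup : linF (u (insert j D)) x - linF (u D) x
      ≤ M * κ + Fintype.card S * (M * (2 * g / a)) := by
    rw [linF_apply, linF_apply, ← Finset.sum_sub_distrib]
    calc ∑ l, (u (insert j D) l * x l - u D l * x l)
        ≤ ∑ l, if l ∈ insert j D then M * x l else 0 := by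
          refine Finset.sum_le_sum fun l _ => ?_
          have := mul_le_mul_of_nonneg_right (h2 D hD j hjD hjk l) (hx l)
          split_ifs at this ⊢ <;> linarith
      _ = M * x j + ∑ l ∈ D, M * x l := by
          rw [← Finset.sum_filter, Finset.filter_mem_eq_inter, Finset.univ_inter,
            Finset.sum_insert hjD]
      _ ≤ M * κ + ∑ l ∈ D, M * (2 * g / a) := by
          gcongr with l hl
          exact hxi l hl
      _ ≤ _ := by
          rw [Finset.sum_const, nsmul_eq_mul]
          have : (D.card : ℝ) ≤ Fintype.card S := by exact_mod_cast Finset.card_le_univ D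
          have hg0 : 0 < g := hκ.trans_le hgκ
          gcongr
  have hm := hmin (insert j D) (by simp [hD, Ne.symm hjk])
  rw [Finset.card_insert_of_notMem hjD, pow_succ, ← mul_assoc, ← hg] at hm
  have hKg : g * K = 3 * g + M * g + Fintype.card S * (M * (2 * g / a)) := by
    rw [hK]; field_simp
  nlinarith [mul_le_mul_of_nonneg_left hgκ hM.le]

/-- A smooth cutoff of the coordinate `x k`, annihilated by `v_j · ∇` on the strip `x j ≤ η` of
the simplex, for every `j`. -/
lemma exists_cutoff_coord {r : S → S → ℝ} (hr : ∀ j k, 0 ≤ r j k)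
    (hirr : IrreducibleRates r) (k : S) {ε : ℝ} (hε : 0 < ε) :
    ∃ (Φ : (S → ℝ) → ℝ) (η : ℝ), 0 < η ∧ ContDiff ℝ 2 Φ ∧
      (∀ x ∈ stdSimplex ℝ S, ∀ j, x j ≤ η → fderiv ℝ Φ x (vvec r j) = 0) ∧
      (∀ x ∈ stdSimplex ℝ S, x k ≤ η → Φ =ᶠ[nhds x] 0) ∧
      (∀ x ∈ stdSimplex ℝ S, ε ≤ x k → Φ =ᶠ[nhds x] 1) := by
  obtain ⟨u, a, M, ha, hM, hharm, h1, h2, hge, hclose⟩ :=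
    exists_harmonic_family hr hirr k (ε := ε / 8) (by positivity)
  obtain ⟨K, hK⟩ : ∃ K : ℝ, K = 3 + M + 2 * M * Fintype.card S / a := ⟨_, rfl⟩
  have hK1 : 1 ≤ K := by
    rw [hK]
    have : 0 ≤ 2 * M * Fintype.card S / a := by positivity
    linarith
  have hK0 : 0 < K := by linarith
  set κ : ℝ := ε / (8 * K ^ Fintype.card S) with hκdef
  have hκ : 0 < κ := by positivity
  have hκK : ∀ D : Finset S, κ * K ^ D.card ≤ ε / 8 := by
    intro D
    calc κ * K ^ D.card ≤ κ * K ^ Fintype.card S := by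
          gcongr
          exact Finset.card_le_univ D
      _ = ε / 8 := by rw [hκdef]; field_simp
  have hκε : κ ≤ ε / 8 := by simpa using hκK ∅
  have hw : ∀ x ∈ stdSimplex ℝ S, |linF (u ∅) x - x k| ≤ ε / 8 := by
    intro x hx
    have hxk : x k = ∑ i, (Pi.single k 1 : S → ℝ) i * x i := by
      simp [Pi.single_apply]
    rw [linF_apply, hxk, ← Finset.sum_sub_distrib]
    calc |∑ i, (u ∅ i * x i - (Pi.single k 1 : S → ℝ) i * x i)|
        ≤ ∑ i, |u ∅ i * x i - (Pi.single k 1 : S → ℝ) i * x i| :=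
          Finset.abs_sum_le_sum_abs _ _
      _ ≤ ∑ i, ε / 8 * x i := Finset.sum_le_sum fun i _ => by
          rw [← sub_mul, abs_mul, abs_of_nonneg (hx.1 i)]
          exact mul_le_mul_of_nonneg_right (hclose i) (hx.1 i)
      _ = ε / 8 := by rw [← Finset.mul_sum, hx.2, mul_one]
  let p : Finset S → (S → ℝ) → ℝ := fun D x => (linF (u D) x - κ * K ^ D.card - ε / 2) / κ
  have hpd : ∀ D x, HasFDerivAt (p D) (κ⁻¹ • linF (u D)) x := by
    intro D x
    have h := (((linF (u D)).hasFDerivAt (x := x)).sub_const (κ * K ^ D.card)).sub_const (ε / 2)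
    have h' := h.const_smul κ⁻¹
    refine h'.congr_of_eventuallyEq (Filter.Eventually.of_forall fun y => ?_)
    simp only [p, Pi.smul_apply, smul_eq_mul, div_eq_inv_mul]
  have hpc : ∀ D, ContDiff ℝ 2 (p D) := fun D =>
    (((linF (u D)).contDiff.sub contDiff_const).sub contDiff_const).div_const κ
  set I : Finset (Finset S) := (Finset.univ.erase k).powerset with hI
  have hmemI : ∀ D, D ∈ I ↔ k ∉ D := fun D => by
    rw [hI, Finset.mem_powerset, Finset.subset_erase]; simp
  let Φ : (S → ℝ) → ℝ := fun x => ∏ D ∈ I, Real.smoothTransition (p D x)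
  have hst : ContDiff ℝ 2 Real.smoothTransition := Real.smoothTransition.contDiff (n := 2)
  have hzero : ∀ x ∈ stdSimplex ℝ S, x k ≤ κ → Φ =ᶠ[nhds x] 0 := by
    intro x hx hxk
    have hlt : p ∅ x < 0 := by
      refine div_neg_of_neg_of_pos ?_ hκ
      have := (abs_le.1 (hw x hx)).2
      simp only [Finset.card_empty, pow_zero, mul_one]
      linarith
    filter_upwards [(hpc ∅).continuous.continuousAt.eventually_lt continuousAt_const hlt]
      with y hy
    exact Finset.prod_eq_zero ((hmemI ∅).2 (by simp))
      (Real.smoothTransition.zero_of_nonpos hy.le)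
  have hone : ∀ x ∈ stdSimplex ℝ S, ε ≤ x k → Φ =ᶠ[nhds x] 1 := by
    intro x hx hxk
    have hgt : ∀ D ∈ I, ∀ᶠ y in nhds x, 1 < p D y := by
      intro D hD
      refine continuousAt_const.eventually_lt (hpc D).continuous.continuousAt ?_
      rw [lt_div_iff₀ hκ]
      have h3 := (abs_le.1 (hw x hx)).1
      have h4 : linF (u ∅) x ≤ linF (u D) x := by
        rw [linF_apply, linF_apply]
        exact Finset.sum_le_sum fun i _ =>
          mul_le_mul_of_nonneg_right (hge D ((hmemI D).1 hD) i) (hx.1 i)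
      linarith [hκK D]
    filter_upwards [(Filter.eventually_all_finset I).2 hgt] with y hy
    exact Finset.prod_eq_one fun D hD => Real.smoothTransition.one_of_one_le (hy D hD).le
  refine ⟨Φ, κ, hκ, contDiff_prod fun D _ => hst.comp (hpc D), ?_, hzero, hone⟩
  intro x hx j hj
  by_cases hjk : j = k
  · subst hjk
    rw [(hzero x hx hj).fderiv_eq]
    simp
  have hder : ∀ D ∈ I, HasFDerivAt (fun y => Real.smoothTransition (p D y))
      (deriv Real.smoothTransition (p D x) • κ⁻¹ • linF (u D)) x := fun D _ =>
    ((hst.differentiable (by norm_num)) (p D x)).hasDerivAt.comp_hasFDerivAt x (hpd D x)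
  rw [(HasFDerivAt.finsetProd hder).fderiv, sum_apply]
  refine Finset.sum_eq_zero fun D hD => ?_
  have hkD := (hmemI D).1 hD
  simp only [smul_apply, smul_eq_mul, linF_vvec]
  by_cases hjD : j ∈ D
  · simp [hharm D hkD j hjD]
  -- otherwise `D` is not a near-minimiser, so either the transition in the factor `D` is flat
  -- at `x`, or another factor vanishes there
  by_cases hfl : p D x ≤ 0 ∨ 1 ≤ p D x
  · simp [deriv_smoothTransition_eq_zero hfl]
  push Not at hfl
  have hprod : ∏ D' ∈ I.erase D, Real.smoothTransition (p D' x) = 0 := by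
    by_contra hne
    refine hjD (mem_of_near_min ha hM hκ hK h1 h2 hx.1 hkD (fun D' hD' => ?_) hjk hj)
    by_cases hDD : D' = D
    · subst hDD; linarith
    have hpos : 0 < p D' x := by
      by_contra hle
      exact Finset.prod_ne_zero_iff.1 hne D' (by simp [hDD, (hmemI D').2 hD'])
        (Real.smoothTransition.zero_of_nonpos (not_lt.1 hle))
    have h5 : 0 < linF (u D') x - κ * K ^ D'.card - ε / 2 := (div_pos_iff_of_pos_right hκ).1 hpos
    have h6 := (div_lt_one hκ).1 hfl.2
    linarith
  rw [hprod]; simp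

/-- Product over `k ∈ B` of the cutoffs of single coordinates. -/
lemma exists_cutoff {r : S → S → ℝ} (hr : ∀ j k, 0 ≤ r j k)
    (hirr : IrreducibleRates r) (B : Finset S) {ε : ℝ} (hε : 0 < ε) :
    ∃ (Φ : (S → ℝ) → ℝ) (η : ℝ), 0 < η ∧ ContDiff ℝ 2 Φ ∧
      (∀ x ∈ stdSimplex ℝ S, ∀ j, x j ≤ η → fderiv ℝ Φ x (vvec r j) = 0) ∧
      (∀ x ∈ stdSimplex ℝ S, ∀ k ∈ B, x k ≤ η → Φ =ᶠ[nhds x] 0) ∧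
      (∀ x ∈ stdSimplex ℝ S, (∀ k ∈ B, ε ≤ x k) → Φ =ᶠ[nhds x] 1) := by
  induction B using Finset.induction_on with
  | empty =>
    exact ⟨1, 1, one_pos, contDiff_const, fun x _ j _ => by simp, by simp,
      fun x _ _ => Filter.EventuallyEq.rfl⟩
  | insert k B hk ih =>
    obtain ⟨Φ, η, hη, hΦ, hd, h0, h1⟩ := ih
    obtain ⟨Ψ, δ, hδ, hΨ, hd', h0', h1'⟩ := exists_cutoff_coord hr hirr k hε
    refine ⟨fun y => Φ y * Ψ y, min η δ, lt_min hη hδ, hΦ.mul hΨ, fun x hx j hj => ?_,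
      fun x hx l hl hlη => ?_, fun x hx hxB => ?_⟩
    · rw [fderiv_fun_mul (hΦ.differentiable (by norm_num) x)
        (hΨ.differentiable (by norm_num) x)]
      simp [hd x hx j (hj.trans (min_le_left _ _)), hd' x hx j (hj.trans (min_le_right _ _))]
    · rcases Finset.mem_insert.1 hl with rfl | hl
      · filter_upwards [h0' x hx (hlη.trans (min_le_right _ _))] with y hy
        simp [hy]
      · filter_upwards [h0 x hx l hl (hlη.trans (min_le_left _ _))] with y hy
        simp [hy]
    · filter_upwards [h1 x hx fun l hl => hxB l (Finset.mem_insert_of_mem hl),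
        h1' x hx (hxB k (Finset.mem_insert_self _ _))] with y hy hy'
      simp [hy, hy']

/-! ### Localisation -/

/-- A function vanishing on a strip `x j ≤ η` stays continuous after division by `x j`. -/
lemma continuousOn_div_of_strip {G : (S → ℝ) → ℝ} (hG : ContinuousOn G (stdSimplex ℝ S))
    {j : S} {η : ℝ} (hη : 0 < η) (h : ∀ x ∈ stdSimplex ℝ S, x j ≤ η → G x = 0) :
    ContinuousOn (fun x => if 0 < x j then G x / x j else 0) (stdSimplex ℝ S) := by
  have hc : ContinuousOn (fun x : S → ℝ => G x / max (x j) η) (stdSimplex ℝ S) :=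
    hG.div (by fun_prop) fun x _ => (hη.trans_le (le_max_right _ _)).ne'
  refine hc.congr fun x hx => ?_
  by_cases hxj : x j ≤ η
  · simp [h x hx hxj]
  · push Not at hxj
    simp [hη.trans hxj, max_eq_left hxj.le]

lemma continuous_fderiv_apply {H : (S → ℝ) → ℝ} (hH : ContDiff ℝ 2 H) (v : S → ℝ) :
    Continuous fun x => fderiv ℝ H x v :=
  (hH.continuous_fderiv (by norm_num)).clm_apply continuous_const

lemma Lop_congr {r : S → S → ℝ} {m : S → ℝ} {b : ℝ} {F H : (S → ℝ) → ℝ} {x : S → ℝ}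
    (h : F =ᶠ[nhds x] H) : Lop r m b F x = Lop r m b H x := by
  have h2 : ∀ d, secondD F d x = secondD H d x := fun d => by
    have : (fun y => fderiv ℝ F y d) =ᶠ[nhds x] fun y => fderiv ℝ H y d := by
      filter_upwards [h.fderiv (𝕜 := ℝ)] with y hy
      rw [hy]
    rw [secondD, secondD, this.fderiv_eq]
  simp only [Lop, h2, h.fderiv_eq]

/-- The localised function `F * Φ`, for a cutoff `Φ` of the coordinates in `B = Aᶜ`. -/
lemma exists_localisation {r : S → S → ℝ} (hr : ∀ j k, 0 ≤ r j k)
    (hirr : IrreducibleRates r) (m : S → ℝ) (b : ℝ) {A B : Finset S} (hAne : A.Nonempty)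
    (hB : ∀ j, j ∈ B ↔ j ∉ A) {F : (S → ℝ) → ℝ} (hF : ∀ j ∈ A, memD r j F)
    {ε : ℝ} (hε : 0 < ε) :
    ∃ H : (S → ℝ) → ℝ, (∀ j : S, memD r j H) ∧
      (∀ x ∈ stdSimplex ℝ S, (∀ j ∈ B, ε ≤ x j) →
        F x = H x ∧ Lop r m b F x = Lop r m b H x) ∧ (∀ x, F x = 0 → H x = 0) := by
  obtain ⟨Φ, η, hη, hΦ, hd, h0, h1⟩ := exists_cutoff hr hirr B hε
  have hFc : ContDiff ℝ 2 F := (hF _ hAne.choose_spec).1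
  have hfd : ∀ x v, fderiv ℝ (fun y => F y * Φ y) x v =
      F x * fderiv ℝ Φ x v + Φ x * fderiv ℝ F x v := fun x v => by
    rw [fderiv_fun_mul (hFc.differentiable (by norm_num) x)
      (hΦ.differentiable (by norm_num) x)]
    simp
  refine ⟨fun y => F y * Φ y, fun j => ⟨hFc.mul hΦ, ?_⟩, fun x hx hxB => ?_, fun x hx => ?_⟩
  · by_cases hj : j ∈ A
    · have hs := continuousOn_div_of_strip (continuous_fderiv_apply hΦ (vvec r j)).continuousOn
        hη (fun x hx hxj => hd x hx j hxj)
      refine ((hFc.continuous.continuousOn.mul hs).add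
        (hΦ.continuous.continuousOn.mul (hF j hj).2)).congr fun x _ => ?_
      simp only [Pi.add_apply, Pi.mul_apply, hfd]
      split_ifs <;> ring
    · refine continuousOn_div_of_strip
        (continuous_fderiv_apply (hFc.mul hΦ) (vvec r j)).continuousOn hη fun x hx hxj => ?_
      have hΦ0 := h0 x hx j ((hB j).2 hj) hxj
      have : Φ x = 0 := hΦ0.eq_of_nhds
      rw [hfd, hd x hx j hxj, this]
      simp
  · have he : F =ᶠ[nhds x] fun y => F y * Φ y := by
      filter_upwards [h1 x hx hxB] with y hy
      simp [hy]
    exact ⟨he.eq_of_nhds, Lop_congr he⟩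
  · simp [hx]

/-- If `[F]_B` vanishes near the boundary of `Σ_B`, then `F` itself vanishes at the corresponding
points of `Σ_{B,0}`. Where some coordinate in `B` is zero, `[F]_B` is zero by definition and
carries no information, so the value of `F` is obtained by continuity, moving towards the
barycentre of `B`. -/
lemma eq_zero_of_FB {B : Finset S} (hBne : B.Nonempty) {F : (S → ℝ) → ℝ} (hF : Continuous F)
    {ε₀ : ℝ} (h : ∀ x ∈ stdSimplex ℝ ↥B, (∃ j, x j < ε₀) → FB B F x = 0)
    {x : S → ℝ} (hx : x ∈ stdSimplex ℝ S) (hx0 : ∀ j ∉ B, x j = 0)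
    {j : S} (hj : j ∈ B) (hxj : x j < ε₀) : F x = 0 := by
  have hcard : (0 : ℝ) < B.card := by exact_mod_cast hBne.card_pos
  let y : ℝ → S → ℝ := fun t i => (1 - t) * x i + t * (if i ∈ B then (B.card : ℝ)⁻¹ else 0)
  have hyc : Continuous y := by fun_prop
  have hy0 : y 0 = x := by
    funext i
    simp [y]
  have hev : ∀ᶠ t in nhds (0 : ℝ), y t j < ε₀ := by
    refine ContinuousAt.eventually_lt (f := fun t => y t j) (by fun_prop) continuousAt_const ?_
    rw [hy0]
    exact hxj
  have hxB : ∑ i : ↥B, x i = 1 := by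
    rw [← hx.2, Finset.sum_coe_sort B x]
    exact Finset.sum_subset (Finset.subset_univ B) fun i _ hi => hx0 i hi
  have hz : ∀ᶠ t in nhdsWithin (0 : ℝ) (Set.Ioi 0), F (y t) = 0 := by
    filter_upwards [nhdsWithin_le_nhds hev, Ioo_mem_nhdsGT (one_pos (α := ℝ))] with t ht htI
    have hpos : ∀ i : ↥B, 0 < y t i := fun i => by
      simp only [y, if_pos i.2]
      have := mul_nonneg (sub_nonneg.2 htI.2.le) (hx.1 i)
      have := mul_pos htI.1 (inv_pos.2 hcard)
      linarith
    have hincl : inclB B (restB B (y t)) = y t := by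
      funext i
      by_cases hi : i ∈ B
      · simp [inclB, restB, hi]
      · simp [inclB, hi, y, hx0 i hi]
    have hmem : restB B (y t) ∈ stdSimplex ℝ ↥B := by
      refine ⟨fun i => (hpos i).le, ?_⟩
      have : ∀ i : ↥B, restB B (y t) i = (1 - t) * x i + t * (B.card : ℝ)⁻¹ := fun i => by
        simp [restB, y]
      rw [Finset.sum_congr rfl fun i _ => this i, Finset.sum_add_distrib, ← Finset.mul_sum, hxB]
      simp
      field_simp
      ring
    have hres := h _ hmem ⟨⟨j, hj⟩, ht⟩
    rw [FB, if_pos (show ∀ i, 0 < restB B (y t) i from hpos), hincl] at hres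
    exact hres
  have hlim : Filter.Tendsto (fun t => F (y t)) (nhdsWithin (0 : ℝ) (Set.Ioi 0))
      (nhds (F x)) := by
    have := (hF.comp hyc).tendsto 0
    simp only [Function.comp_apply, hy0] at this
    exact this.mono_left nhdsWithin_le_nhds
  exact tendsto_nhds_unique (hlim.congr' hz) tendsto_const_nhds

/-- a function F ∈ 𝓓_A can be modified away from Λ_B(ε) into a function
H ∈ 𝓓_S which coincides with F, together with 𝔏F = 𝔏H, on Λ_B(ε). -/
theorem statement14
    (S : Type) [Fintype S] [DecidableEq S] (hS : 2 ≤ Fintype.card S)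
    (r : S → S → ℝ) (hr : ∀ j k, 0 ≤ r j k) (hrdiag : ∀ j, r j j = 0)
    (hirr : IrreducibleRates r)
    (m : S → ℝ) (hm : ∀ j, 0 < m j)
    (hinv : ∀ f : S → ℝ, ∑ j, m j * gen r f j = 0)
    (b : ℝ) (hb : 1 < b)
    (A : Finset S) (hAne : A.Nonempty) (hAproper : A ≠ Finset.univ)
    (B : Finset S) (hB : ∀ j, j ∈ B ↔ j ∉ A)
    (F : (S → ℝ) → ℝ) (hF : ∀ j ∈ A, memD r j F) :
    (∀ ε > (0:ℝ), ∃ H : (S → ℝ) → ℝ,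
      (∀ j : S, memD r j H) ∧
      (∀ x ∈ stdSimplex ℝ S, (∀ j ∈ B, ε ≤ x j) →
        F x = H x ∧ Lop r m b F x = Lop r m b H x)) ∧
    ((∃ ε₀ > (0:ℝ), ∀ x ∈ stdSimplex ℝ ↥B, (∃ j, x j < ε₀) → FB B F x = 0) →
      ∃ ε > (0:ℝ), ∃ H : (S → ℝ) → ℝ,
        (∀ j : S, memD r j H) ∧
        (∀ x ∈ stdSimplex ℝ S, (∀ j ∈ B, ε ≤ x j) →
          F x = H x ∧ Lop r m b F x = Lop r m b H x) ∧
        (∀ x ∈ stdSimplex ℝ S, (∀ j ∉ B, x j = 0) → H x = F x)) := by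
  refine ⟨fun ε hε => ?_, fun ⟨ε₀, hε₀, h⟩ => ?_⟩
  · obtain ⟨H, h1, h2, -⟩ := exists_localisation hr hirr m b hAne hB hF hε
    exact ⟨H, h1, h2⟩
  · obtain ⟨H, h1, h2, h3⟩ := exists_localisation hr hirr m b hAne hB hF hε₀
    refine ⟨ε₀, hε₀, H, h1, h2, fun x hx hx0 => ?_⟩
    by_cases hall : ∀ j ∈ B, ε₀ ≤ x j
    · exact (h2 x hx hall).1.symm
    · push Not at hall
      obtain ⟨j, hj, hxj⟩ := hall
      have hFx := eq_zero_of_FB ⟨j, hj⟩ (hF _ hAne.choose_spec).1.continuous h hx hx0 hj hxj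
      rw [hFx, h3 x hFx]
end
end

section
/- Let A be a nonempty proper subset of S, B := Aᶜ, let p satisfy 1 < p < b < p+1, and let f_A(x) := (∏_{j∈A} x_j)^{p+1}. Then there exists a₀ > 0 such that for every ε > 0 and every x ∈ Σ with max_{j∈A} x_j ≤ a₀·ε and min_{j∈B} x_j ≥ ε, one has (𝔏 f_A)(x) ≤ 0. -/
/-!
Write `q = p + 1`, `g x = ∏_{j ∈ A} x j`, so that `f_A = g ^ q`, and `u k = 1 / x k` on `A`, `u k = 0`
off `A`. If some coordinate `x j`, `j ∈ A`, vanishes, then so do all first and second derivatives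
of `f_A` at `x` (because `q > 2`), hence `𝔏 f_A (x) = 0`. If all coordinates are positive, then
along a direction `d`
* the first derivative is `q g ^ q ∑ u_i d_i`,
* the second derivative is `g ^ q (q² (∑ u_i d_i)² - q ∑ u_i² d_i²)`,

so `𝔏 f_A (x) / (q g ^ q)` is the sum over `j, k` of `m_j r(j,k)` times
`b (u_k - u_j) / x_j + (q (u_k - u_j)² - (u_k² + u_j²)) / 2`.
For `a₀ = (b - p) / b` the hypotheses on `x` give `u_k / x_j ≤ a₀ u_k²` for `j ∉ A`, and then each
such term is at most `(b - p / 2) (u_k² - u_j²)` (`term_le`); here `b < p + 1` makes the cross term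
`(b - p - 1) u_j u_k` nonpositive. The sum of these bounds is zero by invariance of `m`.
-/

open MeasureTheory Set
open scoped NNReal ENNReal

noncomputable section

variable {S : Type*} [Fintype S] [DecidableEq S]

/-- The first derivative of `∏ j ∈ A, y j` at `y` in the direction `d`. -/
def prodD {S : Type*} [DecidableEq S] (A : Finset S) (y d : S → ℝ) : ℝ :=
  ∑ i ∈ A, (∏ j ∈ A.erase i, y j) * d i

lemma hasFDerivAt_coordProd {S : Type*} [Fintype S] [DecidableEq S] (A : Finset S) (y : S → ℝ) :
    HasFDerivAt (fun y : S → ℝ => ∏ j ∈ A, y j)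
      (∑ i ∈ A, (∏ j ∈ A.erase i, y j) • (ContinuousLinearMap.proj i : (S → ℝ) →L[ℝ] ℝ)) y :=
  HasFDerivAt.finsetProd fun i _ => hasFDerivAt_apply i y

/-- The base `∏ j ∈ A, y j` may be zero or negative here; `1 ≤ q` suffices for `Real.rpow`. -/
lemma fderiv_prod_rpow {S : Type*} [Fintype S] [DecidableEq S] (A : Finset S) {q : ℝ} (hq : 1 ≤ q)
    (y d : S → ℝ) :
    fderiv ℝ (fun y : S → ℝ => (∏ j ∈ A, y j) ^ q) y d
      = q * (∏ j ∈ A, y j) ^ (q - 1) * prodD A y d := by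
  have h := (hasFDerivAt_coordProd A y).rpow_const (p := q) (Or.inr hq)
  rw [h.fderiv]
  simp [prodD]

lemma secondD_prod_rpow {S : Type*} [Fintype S] [DecidableEq S] (A : Finset S) {q : ℝ} (hq : 2 ≤ q)
    (x d : S → ℝ) :
    secondD (fun y : S → ℝ => (∏ j ∈ A, y j) ^ q) d x
      = q * ((∏ j ∈ A, x j) ^ (q - 1) * ∑ i ∈ A, prodD (A.erase i) x d * d i
        + (q - 1) * (∏ j ∈ A, x j) ^ (q - 2) * prodD A x d ^ 2) := by
  have h1 : (fun y => fderiv ℝ (fun y : S → ℝ => (∏ j ∈ A, y j) ^ q) y d)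
      = fun y => q * (∏ j ∈ A, y j) ^ (q - 1) * prodD A y d := by
    funext y
    exact fderiv_prod_rpow A (by linarith) y d
  have h2 : HasFDerivAt (fun y => prodD A y d)
      (∑ i ∈ A, d i • ∑ l ∈ A.erase i, (∏ j ∈ (A.erase i).erase l, x j) •
        (ContinuousLinearMap.proj l : (S → ℝ) →L[ℝ] ℝ)) x := by
    unfold prodD
    exact HasFDerivAt.fun_sum fun i _ => (hasFDerivAt_coordProd (A.erase i) x).mul_const (d i)
  have h3 := (((hasFDerivAt_coordProd A x).rpow_const (p := q - 1)
    (Or.inr (by linarith))).const_mul q).fun_mul h2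
  unfold secondD
  rw [h1]
  rw [h3.fderiv]
  have e : q - 1 - 1 = q - 2 := by ring
  have hP : (∑ i ∈ A, (∏ j ∈ A.erase i, x j) •
      (ContinuousLinearMap.proj i : (S → ℝ) →L[ℝ] ℝ)) d = prodD A x d := by
    simp [prodD]
  have hQ : (∑ i ∈ A, d i • ∑ l ∈ A.erase i, (∏ j ∈ (A.erase i).erase l, x j) •
        (ContinuousLinearMap.proj l : (S → ℝ) →L[ℝ] ℝ)) d
      = ∑ i ∈ A, prodD (A.erase i) x d * d i := by
    simp [prodD, mul_comm]
  rw [add_apply, smul_apply,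
    smul_apply, smul_apply,
    smul_apply, hP, hQ, e]
  simp only [smul_eq_mul]
  ring

lemma prodD_eq {S : Type*} [DecidableEq S] (A : Finset S) (x d : S → ℝ)
    (hx : ∀ j ∈ A, x j ≠ 0) :
    prodD A x d = (∏ j ∈ A, x j) * ∑ i ∈ A, (x i)⁻¹ * d i := by
  unfold prodD
  rw [Finset.mul_sum]
  refine Finset.sum_congr rfl fun i hi => ?_
  rw [← Finset.mul_prod_erase A x hi]
  have := hx i hi
  field_simp

lemma sum_prodD_erase {S : Type*} [DecidableEq S] (A : Finset S) (x d : S → ℝ)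
    (hx : ∀ j ∈ A, x j ≠ 0) :
    ∑ i ∈ A, prodD (A.erase i) x d * d i
      = (∏ j ∈ A, x j) * ((∑ i ∈ A, (x i)⁻¹ * d i) ^ 2 - ∑ i ∈ A, ((x i)⁻¹ * d i) ^ 2) := by
  have h : ∀ i ∈ A, prodD (A.erase i) x d * d i = (∏ j ∈ A, x j) *
      (((x i)⁻¹ * d i) * (∑ l ∈ A, (x l)⁻¹ * d l) - ((x i)⁻¹ * d i) ^ 2) := by
    intro i hi
    rw [prodD_eq _ _ _ fun j hj => hx j (Finset.mem_of_mem_erase hj),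
      ← Finset.mul_prod_erase A x hi, ← Finset.add_sum_erase A _ hi]
    have := hx i hi
    field_simp
    ring
  rw [Finset.sum_congr rfl h, ← Finset.mul_sum, Finset.sum_sub_distrib, ← Finset.sum_mul, sq]

/-- Bound on a single jump `j → k`; `w` stands for `1 / x_j`, `s` for `u_j` and `t` for `u_k`. The
two alternatives are `j ∈ A` and `j ∉ A`. -/
lemma term_le {b p s t w : ℝ} (hb : 0 < b) (hpb : p < b) (hbp : b < p + 1)
    (hs : 0 ≤ s) (ht : 0 ≤ t) (h : w = s ∨ (s = 0 ∧ w * t ≤ (b - p) / b * t ^ 2)) :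
    b * (w * (t - s)) + 1 / 2 * ((p + 1) * (t - s) ^ 2 - (t ^ 2 + s ^ 2))
      ≤ (b - p / 2) * (t ^ 2 - s ^ 2) := by
  have hst := mul_nonneg hs ht
  rcases h with rfl | ⟨rfl, h⟩
  · nlinarith [mul_nonneg (sub_pos.2 hbp).le hst, mul_nonneg (sub_pos.2 hpb).le (sq_nonneg t)]
  · have h2 : b * (w * t) ≤ (b - p) * t ^ 2 := by
      calc b * (w * t) ≤ b * ((b - p) / b * t ^ 2) := mul_le_mul_of_nonneg_left h hb.le
        _ = _ := by field_simp
    nlinarith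

/-- negativity of 𝔏 f_A, f_A(x) = (∏_{j∈A} x_j)^{p+1}, near the boundary
Σ_{B,0} and away from the boundary of Σ_B. -/
theorem statement16
    (S : Type) [Fintype S] [DecidableEq S] (hS : 2 ≤ Fintype.card S)
    (r : S → S → ℝ) (hr : ∀ j k, 0 ≤ r j k) (hrdiag : ∀ j, r j j = 0)
    (hirr : IrreducibleRates r)
    (m : S → ℝ) (hm : ∀ j, 0 < m j)
    (hinv : ∀ f : S → ℝ, ∑ j, m j * gen r f j = 0)
    (b : ℝ) (hb : 1 < b)
    (A : Finset S) (hAne : A.Nonempty) (hAproper : A ≠ Finset.univ)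
    (B : Finset S) (hB : ∀ j, j ∈ B ↔ j ∉ A)
    (p : ℝ) (hp1 : 1 < p) (hpb : p < b) (hbp : b < p + 1) :
    ∃ a₀ > (0:ℝ), ∀ ε > (0:ℝ), ∀ x ∈ stdSimplex ℝ S,
      (∀ j ∈ A, x j ≤ a₀ * ε) → (∀ j ∈ B, ε ≤ x j) →
      Lop r m b (fun y => (∏ j ∈ A, y j) ^ (p + 1)) x ≤ 0 := by
  have hq : (2:ℝ) < p + 1 := by linarith
  have hb0 : 0 < b := by linarith
  refine ⟨(b - p) / b, div_pos (by linarith) hb0, fun ε hε x hx hA hBx => ?_⟩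
  have hx0 : ∀ j, 0 ≤ x j := hx.1
  by_cases hz : ∃ j ∈ A, x j = 0
  · -- On the face `g = 0` every term of the operator vanishes.
    obtain ⟨j, hj, hj0⟩ := hz
    have hg : ∏ j ∈ A, x j = 0 := Finset.prod_eq_zero hj hj0
    have e1 : (0:ℝ) ^ (p + 1 - 1) = 0 := Real.zero_rpow (by linarith)
    have e2 : (0:ℝ) ^ (p + 1 - 2) = 0 := Real.zero_rpow (by linarith)
    unfold Lop
    simp only [fderiv_prod_rpow A (show 1 ≤ p + 1 by linarith), secondD_prod_rpow A hq.le, hg,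
      e1, e2]
    simp
  push Not at hz
  have hpos : ∀ j, 0 < x j := by
    intro j
    by_cases hj : j ∈ A
    · exact lt_of_le_of_ne (hx0 j) (hz j hj).symm
    · exact hε.trans_le (hBx j ((hB j).2 hj))
  set g := ∏ j ∈ A, x j with hg
  have hgpos : 0 < g := Finset.prod_pos fun j _ => hpos j
  set u : S → ℝ := fun k => if k ∈ A then (x k)⁻¹ else 0 with hu
  have hu0 : ∀ k, 0 ≤ u k := by
    intro k
    simp only [hu]
    split_ifs
    · exact inv_nonneg.2 (hx0 k)
    · exact le_rfl
  have hg1 : g ^ (p + 1 - 1) * g = g ^ (p + 1) := by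
    rw [← Real.rpow_add_one hgpos.ne']
    congr 1
    ring
  have hg2 : g ^ (p + 1 - 2) * g ^ 2 = g ^ (p + 1) := by
    rw [← Real.rpow_natCast g 2, ← Real.rpow_add hgpos]
    congr 1
    push_cast
    ring
  have hsum : ∀ j k, ∑ i ∈ A, (x i)⁻¹ * (ebasis k - ebasis j) i = u k - u j := by
    intro j k
    simp [ebasis, hu, mul_sub, Finset.sum_sub_distrib, Pi.single_apply]
  have hsumsq : ∀ j k, j ≠ k →
      ∑ i ∈ A, ((x i)⁻¹ * (ebasis k - ebasis j) i) ^ 2 = u k ^ 2 + u j ^ 2 := by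
    intro j k hjk
    have : ∀ i ∈ A, ((x i)⁻¹ * (ebasis k - ebasis j) i) ^ 2
        = (if i = k then ((x i)⁻¹) ^ 2 else 0) + (if i = j then ((x i)⁻¹) ^ 2 else 0) := by
      intro i _
      by_cases h1 : i = k
      · have h2 : i ≠ j := fun h => hjk (h.symm.trans h1)
        simp [ebasis, h1, hjk.symm]
      · by_cases h2 : i = j
        · simp [ebasis, h2, hjk]
        · simp [ebasis, h1, h2]
    rw [Finset.sum_congr rfl this, Finset.sum_add_distrib]
    simp [hu]
  have hF : ∀ j, fderiv ℝ (fun y : S → ℝ => (∏ j ∈ A, y j) ^ (p + 1)) x (vvec r j)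
      = ∑ k, r j k * ((p + 1) * g ^ (p + 1) * (u k - u j)) := by
    intro j
    unfold vvec
    rw [map_sum]
    refine Finset.sum_congr rfl fun k _ => ?_
    rw [map_smul, smul_eq_mul, fderiv_prod_rpow A (by linarith), prodD_eq A x _ hz, hsum,
      ← hg, ← hg1]
    ring
  have hS2 : ∀ j k, r j k * secondD (fun y : S → ℝ => (∏ j ∈ A, y j) ^ (p + 1))
        (ebasis k - ebasis j) x
      = r j k * ((p + 1) * g ^ (p + 1) * ((p + 1) * (u k - u j) ^ 2 - (u k ^ 2 + u j ^ 2))) := by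
    intro j k
    by_cases hjk : j = k
    · subst hjk
      simp [hrdiag]
    · rw [secondD_prod_rpow A hq.le, sum_prodD_erase A x _ hz, prodD_eq A x _ hz, hsum,
        hsumsq j k hjk, ← hg]
      congr 1
      linear_combination (p + 1) * ((u k - u j) ^ 2 - (u k ^ 2 + u j ^ 2)) * hg1
        + (p + 1) * p * (u k - u j) ^ 2 * hg2
  have hL : Lop r m b (fun y => (∏ j ∈ A, y j) ^ (p + 1)) x
      = (p + 1) * g ^ (p + 1) * ∑ j, ∑ k, m j * r j k *
        (b * ((x j)⁻¹ * (u k - u j))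
          + 1 / 2 * ((p + 1) * (u k - u j) ^ 2 - (u k ^ 2 + u j ^ 2))) := by
    unfold Lop
    simp only [mul_assoc (m _), hS2, hF, if_pos (hpos _).ne', ne_eq, Finset.mul_sum,
      ← Finset.sum_add_distrib]
    refine Finset.sum_congr rfl fun j _ => Finset.sum_congr rfl fun k _ => ?_
    rw [div_eq_mul_inv]
    ring
  have hinv2 := hinv fun k => u k ^ 2
  simp only [gen, Finset.mul_sum] at hinv2
  rw [hL]
  refine mul_nonpos_of_nonneg_of_nonpos
    (mul_nonneg (by linarith) (Real.rpow_nonneg hgpos.le _)) ?_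
  calc _ ≤ ∑ j, ∑ k, m j * r j k * ((b - p / 2) * (u k ^ 2 - u j ^ 2)) := by
        refine Finset.sum_le_sum fun j _ => Finset.sum_le_sum fun k _ =>
          mul_le_mul_of_nonneg_left ?_ (mul_nonneg (hm j).le (hr j k))
        refine term_le hb0 hpb hbp (hu0 j) (hu0 k) ?_
        by_cases hj : j ∈ A
        · exact Or.inl (by simp [hu, hj])
        refine Or.inr ⟨by simp [hu, hj], ?_⟩
        by_cases hk : k ∈ A
        · have hle : x k ≤ (b - p) / b * x j :=
            (hA k hk).trans (mul_le_mul_of_nonneg_left (hBx j ((hB j).2 hj))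
              (div_nonneg (by linarith) hb0.le))
          have hinvle : (x j)⁻¹ ≤ (b - p) / b * (x k)⁻¹ := by
            rw [← div_eq_mul_inv, le_div_iff₀ (hpos k), inv_mul_le_iff₀ (hpos j), mul_comm]
            exact hle
          have huk : u k = (x k)⁻¹ := by simp [hu, hk]
          rw [sq, ← mul_assoc]
          exact mul_le_mul_of_nonneg_right (huk ▸ hinvle) (hu0 k)
        · simp [hu, hk]
    _ = (b - p / 2) * ∑ j, ∑ k, m j * (r j k * (u k ^ 2 - u j ^ 2)) := by
        simp only [Finset.mul_sum]
        refine Finset.sum_congr rfl fun j _ => Finset.sum_congr rfl fun k _ => ?_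
        ring
    _ = 0 := by rw [hinv2, mul_zero]
end
end

section
/- Let H ∈ 𝓓_S. Then max over x ∈ Σ_N of | (𝔏_N H)(x) − (𝔏H)(x) − (1/2)·Σ_{j∈S} (g_j(N x_j) − m_j)·(Δ_j H)(x) | converges to 0 as N → ∞, where (Δ_j H)(x) := Σ_{k∈S} r(j,k)(∂_{x_k} − ∂_{x_j})²H(x). In particular there exists a finite constant C₀ > 0, depending on H, such that sup_{N ≥ 1} max_{x ∈ Σ_N} |(𝔏_N H)(x)| ≤ C₀. -/
/-!
The estimate is a second-order Taylor expansion of `H`, in which the first-order part, of size `N`,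
is tamed by invariance of `m` and by membership of `H` in the classes `𝓓_j`.

Expanding `H (x + (e_k - e_j) / N)` at `x` gives, uniformly on the simplex (`taylor_uniform`),
`𝔏_N H = N ∑_j g_j(n_j) (v_j·∇H) + (1/2) ∑_j g_j(n_j) Δ_j H + o(1)`, with `n_j = N x_j` and `g_j`
bounded. Invariance says `∑_j m_j v_j = 0` (`sum_fderiv_vvec`), so `g_j` may be replaced by
`g_j - m_j` in the first sum. At sites with `x_j = 0`, continuity of `φ_j = 1{x_j>0} (v_j·∇H) / x_j`
forces `v_j·∇H(x) = 0` (`fderiv_vvec_eq_zero`). At the other sites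
`N (g_j(n_j) - m_j) (v_j·∇H) = n_j (g_j(n_j) / m_j - 1) m_j φ_j`. Hence the quantity to be estimated
is exactly `∑_j (n_j (g_j(n_j) / m_j - 1) - b) m_j φ_j(x)` plus Taylor remainders (`error_identity`).
The summands tend to zero uniformly (`first_order_uniform`): the bracket is small when `n_j` is
large, and when `n_j` stays bounded `x_j` is small, which makes `φ_j` small since it is continuous
and vanishes on the face `x_j = 0` (`phi_small`).

The uniform bound on `𝔏_N H` follows for large `N`, because `𝔏 H` and `Δ_j H` are bounded on the
simplex; for the remaining finitely many `N` it is enough that `H` is bounded on bounded sets.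
-/


open MeasureTheory Set
open scoped NNReal ENNReal

noncomputable section

variable {S : Type*} [Fintype S] [DecidableEq S]

/-- the N-discretization Σ_N of the simplex -/
def SigN (N : ℕ) : Set (S → ℝ) :=
  {x ∈ stdSimplex ℝ S | ∀ j, ∃ k : ℕ, x j = (k : ℝ) / N}

/-- the generator 𝔏_N of the rescaled zero-range process -/
def LopN (r : S → S → ℝ) (g : S → ℕ → ℝ) (N : ℕ) (H : (S → ℝ) → ℝ) (x : S → ℝ) : ℝ :=
  (N : ℝ) ^ 2 * ∑ j, ∑ k, g j ⌊(N : ℝ) * x j⌋₊ * r j k *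
    (H (x + (N : ℝ)⁻¹ • (ebasis k - ebasis j)) - H x)

/-- the operator Δ_j -/
def DeltaJ (r : S → S → ℝ) (j : S) (H : (S → ℝ) → ℝ) (x : S → ℝ) : ℝ :=
  ∑ k, r j k * secondD H (ebasis k - ebasis j) x

/-! ### Auxiliary functions -/

/-- The function `1{x_j > 0} (v_j·∇H)(x) / x_j`, whose continuity on the simplex defines `𝓓_j`. -/
def phi (r : S → S → ℝ) (j : S) (H : (S → ℝ) → ℝ) (x : S → ℝ) : ℝ :=
  if 0 < x j then fderiv ℝ H x (vvec r j) / x j else 0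

/-- The rescaled fluctuation `n (g_j(n) / m_j - 1)` of the jump rate, which tends to `b`. -/
def coef (m : S → ℝ) (g : S → ℕ → ℝ) (j : S) (n : ℕ) : ℝ := (n : ℝ) * (g j n / m j - 1)

/-- The remainder in the second-order Taylor expansion of `N² (H (x + d / N) - H x)`. -/
def rem (H : (S → ℝ) → ℝ) (N : ℕ) (d x : S → ℝ) : ℝ :=
  (N : ℝ) ^ 2 * (H (x + (N : ℝ)⁻¹ • d) - H x) - N * fderiv ℝ H x d - 1 / 2 * secondD H d x

/-! ### Taylor expansion, uniformly on the simplex -/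

lemma continuous_secondD {H : (S → ℝ) → ℝ} (hH : ContDiff ℝ 2 H) (d : S → ℝ) :
    Continuous (secondD H d) := by
  have h1 : ContDiff ℝ 1 (fun y => fderiv ℝ H y d) :=
    (hH.fderiv_right (m := 1) (by norm_num)).clm_apply contDiff_const
  have h2 := h1.continuous_fderiv (by norm_num)
  exact h2.clm_apply continuous_const

/-- Both derivatives are controlled along the segment `x + [0, t] d`, where the second directional
derivative varies by at most `ε`; the mean value inequality is then applied twice. -/
lemma taylor_segment {H : (S → ℝ) → ℝ} (hH : ContDiff ℝ 2 H) (d x : S → ℝ) {ε t : ℝ}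
    (ht : 0 ≤ t) (hε : ∀ s ∈ Icc 0 t, |secondD H d (x + s • d) - secondD H d x| ≤ ε) :
    |H (x + t • d) - H x - t * fderiv ℝ H x d - t ^ 2 / 2 * secondD H d x| ≤ ε * t ^ 2 := by
  have hε0 : 0 ≤ ε := (abs_nonneg _).trans (hε 0 ⟨le_rfl, ht⟩)
  have hline : ∀ s : ℝ, HasDerivAt (fun s : ℝ => x + s • d) d s := fun s => by
    simpa using ((hasDerivAt_id s).smul_const d).const_add x
  have hdu : ContDiff ℝ 1 (fun y => fderiv ℝ H y d) :=
    (hH.fderiv_right (m := 1) (by norm_num)).clm_apply contDiff_const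
  have h1 : ∀ s ∈ Icc 0 t, |fderiv ℝ H (x + s • d) d - fderiv ℝ H x d - s * secondD H d x|
      ≤ ε * t := by
    intro s hs
    have hd : ∀ a ∈ Icc (0:ℝ) s, HasDerivWithinAt
        (fun a : ℝ => fderiv ℝ H (x + a • d) d - a * secondD H d x)
        (secondD H d (x + a • d) - secondD H d x) (Icc 0 s) a := fun a _ => by
      have h := ((hdu.differentiable (by norm_num) (x + a • d)).hasFDerivAt.comp_hasDerivAt a
        (hline a)).sub ((hasDerivAt_id a).mul_const (secondD H d x))
      have hval : secondD H d (x + a • d) - secondD H d x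
          = fderiv ℝ (fun y => fderiv ℝ H y d) (x + a • d) d - 1 * secondD H d x := by
        rw [one_mul, secondD]
      rw [hval]
      exact h.hasDerivWithinAt
    have := (convex_Icc (0:ℝ) s).norm_image_sub_le_of_norm_hasDerivWithin_le hd
      (fun a ha => (hε a ⟨ha.1, ha.2.trans hs.2⟩)) (left_mem_Icc.2 hs.1) (right_mem_Icc.2 hs.1)
    simp only [zero_smul, add_zero, zero_mul, sub_zero, Real.norm_eq_abs, abs_of_nonneg hs.1]
      at this
    calc _ = _ := by congr 1; ring
      _ ≤ _ := this
      _ ≤ ε * t := by gcongr; exact hs.2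
  have hd : ∀ a ∈ Icc (0:ℝ) t, HasDerivWithinAt
      (fun a : ℝ => H (x + a • d) - a * fderiv ℝ H x d - a ^ 2 / 2 * secondD H d x)
      (fderiv ℝ H (x + a • d) d - fderiv ℝ H x d - a * secondD H d x) (Icc 0 t) a := fun a _ => by
    have h := (((hH.differentiable (by norm_num) (x + a • d)).hasFDerivAt.comp_hasDerivAt a
      (hline a)).sub ((hasDerivAt_id a).mul_const (fderiv ℝ H x d))).sub
      ((((hasDerivAt_id a).pow 2).div_const 2).mul_const (secondD H d x))
    have hval : fderiv ℝ H (x + a • d) d - fderiv ℝ H x d - a * secondD H d x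
        = fderiv ℝ H (x + a • d) d - 1 * fderiv ℝ H x d
          - ((2 : ℕ) : ℝ) * id a ^ (2 - 1) * 1 / 2 * secondD H d x := by
      simp
    rw [hval]
    exact h.hasDerivWithinAt
  have := (convex_Icc (0:ℝ) t).norm_image_sub_le_of_norm_hasDerivWithin_le hd h1
    (left_mem_Icc.2 ht) (right_mem_Icc.2 ht)
  simp only [zero_smul, add_zero, zero_mul, sub_zero, Real.norm_eq_abs, abs_of_nonneg ht] at this
  calc _ = _ := by congr 1; ring
    _ ≤ _ := this
    _ = _ := by ring

lemma taylor_uniform {H : (S → ℝ) → ℝ} (hH : ContDiff ℝ 2 H) (d : S → ℝ) {ε : ℝ} (hε : 0 < ε) :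
    ∀ᶠ N : ℕ in Filter.atTop, ∀ x ∈ stdSimplex ℝ S, |rem H N d x| ≤ ε := by
  have hu := (isCompact_stdSimplex ℝ S).uniformContinuousAt_of_continuousAt (secondD H d)
    (fun x _ => (continuous_secondD hH d).continuousAt) (Metric.dist_mem_uniformity hε)
  obtain ⟨δ, hδ, hδ'⟩ := Metric.mem_uniformity_dist.1 hu
  have hN : Filter.Tendsto (fun N : ℕ => (N : ℝ)⁻¹ * ‖d‖) Filter.atTop (nhds 0) := by
    simpa using (tendsto_inv_atTop_nhds_zero_nat (𝕜 := ℝ)).mul_const ‖d‖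
  filter_upwards [hN.eventually_lt_const hδ, Filter.eventually_ge_atTop 1] with N hNδ hN1 x hx
  have hN0 : (0:ℝ) < N := by exact_mod_cast hN1
  have h := taylor_segment hH d x (ε := ε) (t := (N : ℝ)⁻¹) (by positivity) (fun s hs => by
    have hdist : dist x (x + s • d) < δ := by
      rw [dist_eq_norm, show x - (x + s • d) = -(s • d) by abel, norm_neg, norm_smul,
        Real.norm_eq_abs, abs_of_nonneg hs.1]
      exact lt_of_le_of_lt (by gcongr; exact hs.2) hNδ
    have := hδ' hdist hx
    rw [abs_sub_comm]
    exact le_of_lt this)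
  have heq : rem H N d x = (N : ℝ) ^ 2 * (H (x + (N : ℝ)⁻¹ • d) - H x - (N : ℝ)⁻¹ * fderiv ℝ H x d
      - (N : ℝ)⁻¹ ^ 2 / 2 * secondD H d x) := by
    unfold rem; field_simp
  rw [heq, abs_mul, abs_of_pos (by positivity : (0:ℝ) < (N:ℝ) ^ 2)]
  calc _ ≤ (N : ℝ) ^ 2 * (ε * (N : ℝ)⁻¹ ^ 2) := by gcongr
    _ = ε := by field_simp

/-! ### The functions `φ_j` -/

lemma fderiv_vvec_eq_zero {r : S → S → ℝ} {j : S} {H : (S → ℝ) → ℝ} (hH : memD r j H)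
    {x : S → ℝ} (hx : x ∈ stdSimplex ℝ S) (hxj : x j = 0) : fderiv ℝ H x (vvec r j) = 0 := by
  -- `x` is approached from `{x_j > 0}` along the segment from `x` to the vertex `e_j`.
  set y : ℝ → S → ℝ := fun t => (1 - t) • x + t • ebasis j with hy
  have hyc : Continuous y := by fun_prop
  have hy0 : y 0 = x := by simp [hy]
  have hyj : ∀ t, y t j = t := fun t => by simp [hy, hxj, ebasis]
  have hyS : ∀ t ∈ Ioo (0:ℝ) 1, y t ∈ stdSimplex ℝ S := fun t ht =>
    convex_stdSimplex ℝ S hx (single_mem_stdSimplex ℝ j) (by linarith [ht.2]) ht.1.le (by ring)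
  have hev : ∀ᶠ t in nhdsWithin (0:ℝ) (Ioi 0), t ∈ Ioo (0:ℝ) 1 :=
    Ioo_mem_nhdsGT one_pos
  have hyt : Filter.Tendsto y (nhdsWithin 0 (Ioi 0)) (nhds x) := by
    have := hyc.tendsto 0
    rw [hy0] at this
    exact this.mono_left nhdsWithin_le_nhds
  have hφ : Filter.Tendsto (fun t => phi r j H (y t)) (nhdsWithin 0 (Ioi 0))
      (nhds (phi r j H x)) :=
    (hH.2 x hx).tendsto.comp
      (tendsto_nhdsWithin_iff.2 ⟨hyt, hev.mono fun t ht => hyS t ht⟩)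
  have h1 : Filter.Tendsto (fun t : ℝ => t * phi r j H (y t)) (nhdsWithin 0 (Ioi 0)) (nhds 0) := by
    simpa using (Filter.tendsto_id.mono_left nhdsWithin_le_nhds).mul hφ
  have hcf : Continuous fun z => fderiv ℝ H z (vvec r j) :=
    (hH.1.continuous_fderiv (by norm_num)).clm_apply continuous_const
  have h2 : Filter.Tendsto (fun t => fderiv ℝ H (y t) (vvec r j)) (nhdsWithin 0 (Ioi 0))
      (nhds (fderiv ℝ H x (vvec r j))) := (hcf.tendsto x).comp hyt
  refine tendsto_nhds_unique h2 (h1.congr' (hev.mono fun t ht => ?_))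
  have : t ≠ 0 := ht.1.ne'
  simp only [phi, hyj, if_pos ht.1]
  field_simp

lemma fderiv_vvec_eq {r : S → S → ℝ} {j : S} {H : (S → ℝ) → ℝ} (hH : memD r j H)
    {x : S → ℝ} (hx : x ∈ stdSimplex ℝ S) : fderiv ℝ H x (vvec r j) = x j * phi r j H x := by
  rcases (hx.1 j).eq_or_lt' with h | h
  · simp [h, fderiv_vvec_eq_zero hH hx h]
  · simp only [phi, if_pos h]
    field_simp

/-- The set where `|φ_j| ≥ ε` is compact and avoids the face `x_j = 0`, so `x_j` is bounded below
on it. -/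
lemma phi_small {r : S → S → ℝ} {j : S} {H : (S → ℝ) → ℝ} (hH : memD r j H) {ε : ℝ} (hε : 0 < ε) :
    ∃ δ > 0, ∀ x ∈ stdSimplex ℝ S, x j < δ → |phi r j H x| ≤ ε := by
  have hc : ContinuousOn (phi r j H) (stdSimplex ℝ S) := hH.2
  have hcl : IsClosed (stdSimplex ℝ S ∩ (fun x => |phi r j H x|) ⁻¹' Ici ε) :=
    hc.abs.preimage_isClosed_of_isClosed (isClosed_stdSimplex ℝ S) isClosed_Ici
  have hK := (isCompact_stdSimplex ℝ S).of_isClosed_subset hcl inter_subset_left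
  obtain ⟨δ, hδ, h⟩ := hK.exists_forall_le' (f := fun x => x j) (a := 0)
    (continuous_apply j).continuousOn (fun x hx => by
      by_contra hneg
      have : ε ≤ |phi r j H x| := hx.2
      simp [phi, if_neg hneg] at this
      linarith)
  refine ⟨δ, hδ, fun x hx hxδ => ?_⟩
  by_contra hneg
  exact absurd (h x ⟨hx, (not_le.1 hneg).le⟩) (not_le.2 hxδ)

lemma phi_bounded {r : S → S → ℝ} {j : S} {H : (S → ℝ) → ℝ} (hH : memD r j H) :
    ∃ C ≥ 0, ∀ x ∈ stdSimplex ℝ S, |phi r j H x| ≤ C := by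
  obtain ⟨C, hC⟩ := (isCompact_stdSimplex ℝ S).exists_bound_of_continuousOn hH.2
  exact ⟨max C 0, le_max_right _ _, fun x hx => (hC x hx).trans (le_max_left _ _)⟩

/-! ### The jump rates -/

lemma coef_bounded {m : S → ℝ} {b : ℝ} {g : S → ℕ → ℝ} {j : S}
    (hglim : Filter.Tendsto (coef m g j) Filter.atTop (nhds b)) :
    ∃ C ≥ 0, ∀ n, |coef m g j n| ≤ C := by
  obtain ⟨C, hC⟩ := hglim.abs.bddAbove_range
  exact ⟨max C 0, le_max_right _ _, fun n => (hC ⟨n, rfl⟩).trans (le_max_left _ _)⟩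

lemma g_bounded {m : S → ℝ} {b : ℝ} {g : S → ℕ → ℝ} {j : S} (hm : 0 < m j) (hg0 : g j 0 = 0)
    (hglim : Filter.Tendsto (coef m g j) Filter.atTop (nhds b)) :
    ∃ C ≥ 0, ∀ n, |g j n| ≤ C := by
  obtain ⟨C, hC0, hC⟩ := coef_bounded hglim
  refine ⟨m j * (C + 1), by positivity, fun n => ?_⟩
  rcases Nat.eq_zero_or_pos n with rfl | hn
  · rw [hg0, abs_zero]; positivity
  have hn1 : (1:ℝ) ≤ n := by exact_mod_cast hn
  have h1 : |g j n / m j - 1| ≤ C := by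
    refine le_trans ?_ (hC n)
    rw [coef, abs_mul, Nat.abs_cast]
    exact le_mul_of_one_le_left (abs_nonneg _) hn1
  have h2 : g j n = m j * ((g j n / m j - 1) + 1) := by field_simp; ring
  rw [h2, abs_mul, abs_of_pos hm]
  gcongr
  exact (abs_add_le _ _).trans (by simpa using h1)

/-- On `Σ_N` the number `N x_j` of particles is an integer, so the floor is exact. -/
lemma floor_eq {N : ℕ} (hN : 1 ≤ N) {x : S → ℝ} (hx : x ∈ SigN (S := S) N) (j : S) :
    ((⌊(N : ℝ) * x j⌋₊ : ℕ) : ℝ) = N * x j := by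
  obtain ⟨k, hk⟩ := hx.2 j
  have hN0 : (N : ℝ) ≠ 0 := by positivity
  have : (N : ℝ) * x j = k := by rw [hk]; field_simp
  rw [this, Nat.floor_natCast]

lemma first_order_uniform {r : S → S → ℝ} {m : S → ℝ} {b : ℝ} {g : S → ℕ → ℝ} {j : S}
    {H : (S → ℝ) → ℝ} (hm : 0 < m j) (hH : memD r j H)
    (hglim : Filter.Tendsto (coef m g j) Filter.atTop (nhds b)) {ε : ℝ} (hε : 0 < ε) :
    ∀ᶠ N : ℕ in Filter.atTop, ∀ x ∈ SigN (S := S) N,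
      |(coef m g j ⌊(N : ℝ) * x j⌋₊ - b) * m j * phi r j H x| ≤ ε := by
  obtain ⟨C, hC0, hC⟩ := coef_bounded hglim
  obtain ⟨P, hP0, hP⟩ := phi_bounded hH
  have hD : 0 < (C + |b| + 1) * m j := by positivity
  obtain ⟨δ, hδ, hsmall⟩ := phi_small hH (div_pos hε hD)
  have hQ : 0 < m j * (P + 1) := by positivity
  obtain ⟨K, hK⟩ := Metric.tendsto_atTop.1 hglim _ (div_pos hε hQ)
  obtain ⟨N₀, hN₀⟩ := exists_nat_gt ((K : ℝ) / δ)
  filter_upwards [Filter.eventually_ge_atTop N₀, Filter.eventually_ge_atTop 1] with N hN hN1 x hx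
  have hfl := floor_eq hN1 hx j
  set n := ⌊(N : ℝ) * x j⌋₊
  have hNpos : (0:ℝ) < N := by exact_mod_cast hN1
  rw [abs_mul, abs_mul, abs_of_pos hm]
  -- Many particles at `j` make the coefficient small; few particles make `φ_j` small.
  rcases le_or_gt K n with h | h
  · have h1 : |coef m g j n - b| ≤ ε / (m j * (P + 1)) := (hK n h).le
    have h2 : |phi r j H x| ≤ P + 1 := (hP x hx.1).trans (by linarith)
    calc _ ≤ ε / (m j * (P + 1)) * m j * (P + 1) := by gcongr
      _ = ε := by field_simp
  · have hxδ : x j < δ := by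
      have h1 : (K : ℝ) < N * δ := by
        rw [div_lt_iff₀ hδ] at hN₀
        exact hN₀.trans_le (by gcongr)
      have h2 : (n : ℝ) < K := by exact_mod_cast h
      rw [hfl] at h2
      exact lt_of_mul_lt_mul_left (h2.trans h1) hNpos.le
    have h1 : |coef m g j n - b| ≤ C + |b| + 1 :=
      (abs_sub _ _).trans (by linarith [hC n])
    have h2 := hsmall x hx.1 hxδ
    calc _ ≤ (C + |b| + 1) * m j * (ε / ((C + |b| + 1) * m j)) := by gcongr
      _ = ε := by field_simp

/-! ### Decomposition of the error -/

/-- Invariance of `m` means `∑_j m_j v_j = 0`; here it is paired with a linear functional. -/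
lemma sum_fderiv_vvec {r : S → S → ℝ} {m : S → ℝ}
    (hinv : ∀ f : S → ℝ, ∑ j, m j * gen r f j = 0) (L : (S → ℝ) →L[ℝ] ℝ) :
    ∑ j, m j * L (vvec r j) = 0 := by
  rw [← hinv fun k => L (ebasis k)]
  simp [vvec, gen, map_sum]

lemma Lop_eq {r : S → S → ℝ} {m : S → ℝ} {b : ℝ} {H : (S → ℝ) → ℝ} {x : S → ℝ}
    (hx : x ∈ stdSimplex ℝ S) :
    Lop r m b H x = b * ∑ j, m j * phi r j H x + 1 / 2 * ∑ j, m j * DeltaJ r j H x := by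
  unfold Lop DeltaJ
  congr 2
  · refine Finset.sum_congr rfl fun j _ => ?_
    rcases (hx.1 j).eq_or_lt' with h | h
    · simp [phi, h]
    · simp only [phi, if_pos h, if_pos h.ne']
      ring
  · refine Finset.sum_congr rfl fun j _ => ?_
    rw [Finset.mul_sum]
    exact Finset.sum_congr rfl fun k _ => by ring

lemma error_identity {r : S → S → ℝ} {m : S → ℝ} (hm : ∀ j, 0 < m j)
    (hinv : ∀ f : S → ℝ, ∑ j, m j * gen r f j = 0) {b : ℝ} {g : S → ℕ → ℝ}
    {H : (S → ℝ) → ℝ} (hH : ∀ j : S, memD r j H) {N : ℕ} (hN : 1 ≤ N) {x : S → ℝ}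
    (hx : x ∈ SigN (S := S) N) :
    LopN r g N H x - Lop r m b H x -
        (1 / 2) * ∑ j, (g j ⌊(N : ℝ) * x j⌋₊ - m j) * DeltaJ r j H x =
      ∑ j, (coef m g j ⌊(N : ℝ) * x j⌋₊ - b) * m j * phi r j H x +
      ∑ j, ∑ k, g j ⌊(N : ℝ) * x j⌋₊ * r j k * rem H N (ebasis k - ebasis j) x := by
  set n : S → ℕ := fun j => ⌊(N : ℝ) * x j⌋₊ with hn
  have h0 := sum_fderiv_vvec hinv (fderiv ℝ H x)
  have hfirst : ∀ j, (N : ℝ) * (g j (n j) - m j) * fderiv ℝ H x (vvec r j)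
      = coef m g j (n j) * m j * phi r j H x := fun j => by
    have hmj := (hm j).ne'
    rw [fderiv_vvec_eq (hH j) hx.1, coef, hn, floor_eq hN hx j]
    field_simp
  have hvv : ∀ j, fderiv ℝ H x (vvec r j) = ∑ k, r j k * fderiv ℝ H x (ebasis k - ebasis j) :=
    fun j => by simp only [vvec, map_sum, map_smul, smul_eq_mul]
  have hexp : LopN r g N H x = ∑ j, (g j (n j) * (N * fderiv ℝ H x (vvec r j)) +
      1 / 2 * (g j (n j) * DeltaJ r j H x) +
      ∑ k, g j (n j) * r j k * rem H N (ebasis k - ebasis j) x) := by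
    rw [LopN, Finset.mul_sum]
    refine Finset.sum_congr rfl fun j _ => ?_
    rw [hvv, DeltaJ]
    simp only [Finset.mul_sum, ← Finset.sum_add_distrib]
    refine Finset.sum_congr rfl fun k _ => ?_
    rw [rem]
    ring
  have hN0 : ∑ j, (N : ℝ) * (m j * fderiv ℝ H x (vvec r j)) = 0 := by
    rw [← Finset.mul_sum, h0, mul_zero]
  rw [hexp, Lop_eq hx.1, ← sub_zero (∑ j, _ - _ - _), ← hN0]
  simp only [Finset.mul_sum, ← Finset.sum_add_distrib, ← Finset.sum_sub_distrib]
  refine Finset.sum_congr rfl fun j _ => ?_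
  linear_combination hfirst j

lemma error_uniform {r : S → S → ℝ} {m : S → ℝ} (hm : ∀ j, 0 < m j)
    (hinv : ∀ f : S → ℝ, ∑ j, m j * gen r f j = 0) {b : ℝ} {g : S → ℕ → ℝ}
    (hg0 : ∀ j, g j 0 = 0)
    (hglim : ∀ j, Filter.Tendsto (coef m g j) Filter.atTop (nhds b))
    {H : (S → ℝ) → ℝ} (hH : ∀ j : S, memD r j H) {ε : ℝ} (hε : 0 < ε) :
    ∀ᶠ N : ℕ in Filter.atTop, ∀ x ∈ SigN (S := S) N,
      |LopN r g N H x - Lop r m b H x -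
        (1 / 2) * ∑ j, (g j ⌊(N : ℝ) * x j⌋₊ - m j) * DeltaJ r j H x| ≤ ε := by
  choose G hG0 hG using fun j => g_bounded (hm j) (hg0 j) (hglim j)
  set A : ℝ := ∑ _j : S, 1 + ∑ j, ∑ k, G j * |r j k| with hA
  have hA0 : 0 ≤ A := add_nonneg (Finset.sum_nonneg fun _ _ => zero_le_one)
    (Finset.sum_nonneg fun j _ => Finset.sum_nonneg fun k _ =>
      mul_nonneg (hG0 j) (abs_nonneg _))
  set η : ℝ := ε / (A + 1)
  have hη : 0 < η := by positivity
  have e1 : ∀ᶠ N : ℕ in Filter.atTop, ∀ j : S, ∀ x ∈ SigN (S := S) N,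
      |(coef m g j ⌊(N : ℝ) * x j⌋₊ - b) * m j * phi r j H x| ≤ η :=
    Filter.eventually_all.2 fun j => first_order_uniform (hm j) (hH j) (hglim j) hη
  have e2 : ∀ᶠ N : ℕ in Filter.atTop, ∀ j k : S, ∀ x ∈ stdSimplex ℝ S,
      |rem H N (ebasis k - ebasis j) x| ≤ η :=
    Filter.eventually_all.2 fun j => Filter.eventually_all.2 fun k =>
      taylor_uniform (hH j).1 _ hη
  filter_upwards [e1, e2, Filter.eventually_ge_atTop 1] with N h1 h2 hN x hx
  rw [error_identity hm hinv hH hN hx]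
  calc _ ≤ ∑ _j : S, η + ∑ j, ∑ k, G j * |r j k| * η := by
        refine (abs_add_le _ _).trans (add_le_add ?_ ?_)
        · exact (Finset.abs_sum_le_sum_abs _ _).trans
            (Finset.sum_le_sum fun j _ => h1 j x hx)
        · refine (Finset.abs_sum_le_sum_abs _ _).trans (Finset.sum_le_sum fun j _ => ?_)
          refine (Finset.abs_sum_le_sum_abs _ _).trans (Finset.sum_le_sum fun k _ => ?_)
          rw [abs_mul, abs_mul]
          have := hG0 j
          gcongr
          · exact hG j _
          · exact h2 j k x hx.1
    _ = A * η := by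
        rw [hA, add_mul]
        simp only [Finset.sum_mul, one_mul]
    _ ≤ (A + 1) * η := by gcongr; linarith
    _ = ε := by simp only [η]; field_simp

/-! ### The uniform bound -/

lemma DeltaJ_bounded (r : S → S → ℝ) (j : S) {H : (S → ℝ) → ℝ} (hH : ContDiff ℝ 2 H) :
    ∃ C ≥ 0, ∀ x ∈ stdSimplex ℝ S, |DeltaJ r j H x| ≤ C := by
  have hc : Continuous (DeltaJ r j H) :=
    continuous_finsetSum _ fun k _ => continuous_const.mul (continuous_secondD hH _)
  obtain ⟨C, hC⟩ := (isCompact_stdSimplex ℝ S).exists_bound_of_continuousOn hc.continuousOn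
  exact ⟨max C 0, le_max_right _ _, fun x hx => (hC x hx).trans (le_max_left _ _)⟩

lemma norm_le_one_of_mem_stdSimplex {x : S → ℝ} (hx : x ∈ stdSimplex ℝ S) : ‖x‖ ≤ 1 :=
  (pi_norm_le_iff_of_nonneg zero_le_one).2 fun j => by
    rw [Real.norm_eq_abs, abs_of_nonneg (hx.1 j), ← hx.2]
    exact Finset.single_le_sum (fun i _ => hx.1 i) (Finset.mem_univ j)

/-- A crude bound on `𝔏_N H`, growing like `N²`; it serves for finitely many `N`. -/
lemma LopN_crude (r : S → S → ℝ) {g : S → ℕ → ℝ} {G : S → ℝ} (hG0 : ∀ j, 0 ≤ G j)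
    (hG : ∀ j n, |g j n| ≤ G j) {H : (S → ℝ) → ℝ} (hH : Continuous H) :
    ∃ C ≥ 0, ∀ N : ℕ, 1 ≤ N → ∀ x ∈ SigN (S := S) N, |LopN r g N H x| ≤ (N : ℝ) ^ 2 * C := by
  -- Jump targets have norm at most `1 + ‖e_k - e_j‖ ≤ 3`.
  obtain ⟨B, hB⟩ := (isCompact_closedBall (0 : S → ℝ) 3).exists_bound_of_continuousOn
    hH.continuousOn
  have hB0 : 0 ≤ B := (norm_nonneg _).trans (hB 0 (by simp))
  refine ⟨∑ j, ∑ k, G j * |r j k| * (B + B), Finset.sum_nonneg fun j _ =>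
    Finset.sum_nonneg fun k _ => ?_, fun N hN x hx => ?_⟩
  · have := hG0 j
    positivity
  have hx1 := norm_le_one_of_mem_stdSimplex hx.1
  have hNinv : (N : ℝ)⁻¹ ≤ 1 := inv_le_one_of_one_le₀ (by exact_mod_cast hN)
  have he : ∀ k : S, ‖(ebasis k : S → ℝ)‖ ≤ 1 := fun k =>
    norm_le_one_of_mem_stdSimplex (single_mem_stdSimplex ℝ k)
  rw [LopN, abs_mul, abs_of_nonneg (by positivity : (0:ℝ) ≤ (N:ℝ) ^ 2)]
  gcongr
  refine (Finset.abs_sum_le_sum_abs _ _).trans (Finset.sum_le_sum fun j _ => ?_)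
  refine (Finset.abs_sum_le_sum_abs _ _).trans (Finset.sum_le_sum fun k _ => ?_)
  have hjump : ‖x + (N : ℝ)⁻¹ • (ebasis k - ebasis j)‖ ≤ 3 := by
    have h1 : ‖(ebasis k - ebasis j : S → ℝ)‖ ≤ 2 :=
      (norm_sub_le _ _).trans (by linarith [he k, he j])
    have h2 : ‖(N : ℝ)⁻¹ • (ebasis k - ebasis j : S → ℝ)‖ ≤ 1 * 2 := by
      rw [norm_smul, Real.norm_eq_abs, abs_of_nonneg (by positivity)]
      gcongr
    exact (norm_add_le _ _).trans (by linarith)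
  rw [abs_mul, abs_mul]
  have := hG0 j
  gcongr
  · exact hG j _
  · exact (abs_sub _ _).trans (add_le_add (hB _ (by simpa using hjump))
      (hB x (by simpa using hx1.trans (by norm_num))))

lemma main_terms_bounded {r : S → S → ℝ} {m : S → ℝ} {b : ℝ} {g : S → ℕ → ℝ} {G : S → ℝ}
    (hG : ∀ j n, |g j n| ≤ G j) {H : (S → ℝ) → ℝ}
    (hH : ∀ j : S, memD r j H) :
    ∃ C ≥ 0, ∀ N : ℕ, ∀ x ∈ SigN (S := S) N,
      |Lop r m b H x + (1 / 2) * ∑ j, (g j ⌊(N : ℝ) * x j⌋₊ - m j) * DeltaJ r j H x| ≤ C := by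
  choose P hP0 hP using fun j => phi_bounded (hH j)
  choose D hD0 hD using fun j => DeltaJ_bounded r j (hH j).1
  have hG0 : ∀ j, 0 ≤ G j := fun j => (abs_nonneg _).trans (hG j 0)
  refine ⟨∑ j, (|b| * (|m j| * P j) + G j * D j), Finset.sum_nonneg fun j _ => ?_,
    fun N x hx => ?_⟩
  · have := hG0 j
    have := hP0 j
    have := hD0 j
    positivity
  have heq : Lop r m b H x +
      (1 / 2) * ∑ j, (g j ⌊(N : ℝ) * x j⌋₊ - m j) * DeltaJ r j H x =
      ∑ j, (b * (m j * phi r j H x) + 1 / 2 * (g j ⌊(N : ℝ) * x j⌋₊ * DeltaJ r j H x)) := by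
    rw [Lop_eq hx.1]
    simp only [Finset.mul_sum, ← Finset.sum_add_distrib]
    exact Finset.sum_congr rfl fun j _ => by ring
  rw [heq]
  refine (Finset.abs_sum_le_sum_abs _ _).trans (Finset.sum_le_sum fun j _ => ?_)
  refine (abs_add_le _ _).trans (add_le_add ?_ ?_)
  · rw [abs_mul, abs_mul]
    gcongr
    exact hP j x hx.1
  · have h1 : |g j ⌊(N : ℝ) * x j⌋₊ * DeltaJ r j H x| ≤ G j * D j := by
      rw [abs_mul]
      have := hG0 j
      gcongr
      · exact hG j _
      · exact hD j x hx.1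
    rw [abs_mul, abs_of_pos (by norm_num : (0:ℝ) < 1 / 2)]
    linarith [abs_nonneg (g j ⌊(N : ℝ) * x j⌋₊ * DeltaJ r j H x)]

/-- uniform expansion of 𝔏_N H for H ∈ 𝓓_S, and the uniform bound on
𝔏_N H over the discretized simplices. -/
theorem statement17
    (S : Type) [Fintype S] [DecidableEq S] (hS : 2 ≤ Fintype.card S)
    (r : S → S → ℝ) (hr : ∀ j k, 0 ≤ r j k) (hrdiag : ∀ j, r j j = 0)
    (hirr : IrreducibleRates r)
    (m : S → ℝ) (hm : ∀ j, 0 < m j)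
    (hinv : ∀ f : S → ℝ, ∑ j, m j * gen r f j = 0)
    (b : ℝ) (hb : 1 < b)
    (g : S → ℕ → ℝ) (hg0 : ∀ j, g j 0 = 0) (hgnn : ∀ j n, 0 ≤ g j n)
    (hglim : ∀ j, Filter.Tendsto (fun n : ℕ => (n : ℝ) * (g j n / m j - 1))
      Filter.atTop (nhds b))
    (H : (S → ℝ) → ℝ) (hH : ∀ j : S, memD r j H) :
    (∀ ε > (0:ℝ), ∃ N₀ : ℕ, ∀ N ≥ N₀, ∀ x ∈ SigN (S := S) N,
      |LopN r g N H x - Lop r m b H x -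
        (1 / 2) * ∑ j, (g j ⌊(N : ℝ) * x j⌋₊ - m j) * DeltaJ r j H x| ≤ ε) ∧
    (∃ C₀ > (0:ℝ), ∀ N : ℕ, 1 ≤ N → ∀ x ∈ SigN (S := S) N,
      |LopN r g N H x| ≤ C₀) := by
  have hlim : ∀ j, Filter.Tendsto (coef m g j) Filter.atTop (nhds b) := hglim
  have herr : ∀ ε > (0:ℝ), ∃ N₀ : ℕ, ∀ N ≥ N₀, ∀ x ∈ SigN (S := S) N,
      |LopN r g N H x - Lop r m b H x -
        (1 / 2) * ∑ j, (g j ⌊(N : ℝ) * x j⌋₊ - m j) * DeltaJ r j H x| ≤ ε := fun ε hε =>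
    Filter.eventually_atTop.1 (error_uniform hm hinv hg0 hlim hH hε)
  refine ⟨herr, ?_⟩
  choose G hG0 hG using fun j => g_bounded (hm j) (hg0 j) (hlim j)
  have : Nonempty S := Fintype.card_pos_iff.1 (by omega)
  obtain ⟨N₀, hN₀⟩ := herr 1 one_pos
  obtain ⟨A, hA0, hA⟩ := LopN_crude r hG0 hG (hH (Classical.arbitrary S)).1.continuous
  obtain ⟨B, hB0, hB⟩ := main_terms_bounded (m := m) (b := b) hG hH
  refine ⟨(N₀ : ℝ) ^ 2 * A + (1 + B), by positivity, fun N hN x hx => ?_⟩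
  rcases le_total N₀ N with h | h
  · have h1 := hN₀ N h x hx
    have h2 := hB N x hx
    have h3 : 0 ≤ (N₀ : ℝ) ^ 2 * A := by positivity
    rw [abs_le] at h1 h2 ⊢
    constructor <;> linarith
  · have h1 := hA N hN x hx
    have h2 : (N : ℝ) ^ 2 * A ≤ (N₀ : ℝ) ^ 2 * A := by gcongr
    linarith
end
end

section
/- Let A be a nonempty proper subset of S and for j ∈ A let w_j ∈ ℝ^A denote the canonical projection of v_j onto the coordinates in A. Let D and D' be two distinct subsets of A and suppose that Σ_{j∈D} α_j w_j + Σ_{k∈A∖D} α_k e_k = Σ_{j∈D'} β_j w_j + Σ_{k∈A∖D'} β_k e_k for real numbers α_j, β_j with α_j·β_j ≥ 0 for all j ∈ A. Then α_j = β_j for all j ∈ A, and α_k = β_k = 0 for every k in the symmetric difference D Δ D'. -/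
/-!
Moving everything to one side, the coordinates of the hypothesis read `∑ j, x j • v_j = y` on `A`,
where `x j = 1_D(j) α j - 1_{D'}(j) β j` and `y i = 1_{D'ᶜ}(i) β i - 1_{Dᶜ}(i) α i`.
The sign condition on `α, β` says precisely that `x i * y i ≥ 0` for every `i ∈ A`.

Pairing with `sign x` gives `0 ≤ ∑ j, ∑ i, r j i * (sign (x i) * x j - |x j|)`, a sum of nonpositive
terms, so every term vanishes. Hence a positive rate `r j i` with `x j ≠ 0` forces `x i ≠ 0`: the
support of `x` is closed under the jumps of the chain. It is contained in the proper subset `A`, so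
irreducibility forces it to be empty (`eq_zero_of_mul_nonneg`). Thus `x = 0`, hence `y = 0` on `A`,
and the claim is read off from these equations.
-/

open MeasureTheory Set
open scoped NNReal ENNReal

noncomputable section

variable {S : Type*} [Fintype S] [DecidableEq S]

/-- the canonical projection of v_j on ℝ^A -/
def wproj (r : S → S → ℝ) (A : Finset S) (j : S) : ↥A → ℝ := fun i => vvec r j i.1

/-- the canonical basis vector e_k of ℝ^A (for k ∈ A) -/
def eA (A : Finset S) (k : S) : ↥A → ℝ := fun i => if i.1 = k then 1 else 0

theorem vvec_apply (r : S → S → ℝ) (j i : S) :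
    vvec r j i = r j i - (if j = i then ∑ k, r j k else 0) := by
  simp only [vvec, ebasis, Finset.sum_apply, Pi.smul_apply, Pi.sub_apply, smul_eq_mul, mul_sub,
    Finset.sum_sub_distrib, Pi.single_apply]
  by_cases h : j = i
  · simp [h]
  · simp [h, Ne.symm h]

theorem sum_mul_vvec (r : S → S → ℝ) (x : S → ℝ) (i : S) :
    ∑ j, x j * vvec r j i = ∑ j, x j * r j i - x i * ∑ k, r i k := by
  simp [vvec_apply, mul_sub, Finset.sum_sub_distrib]

theorem sign_mul_le_abs (a b : ℝ) : Real.sign a * b ≤ |b| := by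
  rcases Real.sign_apply_eq a with h | h | h <;> rw [h]
  · simpa using neg_le_abs b
  · simp
  · simpa using le_abs_self b

theorem sign_mul_nonneg {a y : ℝ} (h : 0 ≤ a * y) : 0 ≤ Real.sign a * y := by
  rcases lt_trichotomy a 0 with ha | ha | ha
  · rw [Real.sign_of_neg ha]; nlinarith
  · simp [ha]
  · rw [Real.sign_of_pos ha]; nlinarith

theorem sign_mul_self_eq_abs (a : ℝ) : Real.sign a * a = |a| := by
  rcases lt_trichotomy a 0 with ha | ha | ha
  · rw [Real.sign_of_neg ha, abs_of_neg ha]; ring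
  · simp [ha]
  · rw [Real.sign_of_pos ha, abs_of_pos ha]; ring

/-- The transposed generator, killed outside a proper subset `A`, reverses some sign: a vector
`x` supported in `A` whose image `∑ j, x j • v_j` satisfies `0 ≤ x i * (image) i` on `A` vanishes. -/
theorem eq_zero_of_mul_nonneg (r : S → S → ℝ) (hr : ∀ j k, 0 ≤ r j k)
    (hirr : IrreducibleRates r) (A : Finset S) (hA : A ≠ Finset.univ) (x : S → ℝ)
    (hx : ∀ i, i ∉ A → x i = 0) (hxy : ∀ i ∈ A, 0 ≤ x i * ∑ j, x j * vvec r j i) (j : S) :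
    x j = 0 := by
  have hterm : ∀ j i, r j i * (Real.sign (x i) * x j - |x j|) ≤ 0 := fun j i =>
    mul_nonpos_of_nonneg_of_nonpos (hr j i) (sub_nonpos.2 (sign_mul_le_abs _ _))
  have hpair : ∑ j, ∑ i, r j i * (Real.sign (x i) * x j - |x j|)
      = ∑ i, Real.sign (x i) * ∑ j, x j * vvec r j i := by
    simp only [sum_mul_vvec, mul_sub, Finset.sum_sub_distrib]
    congr 1
    · rw [Finset.sum_comm]
      refine Finset.sum_congr rfl fun i _ => ?_
      rw [Finset.mul_sum]
      exact Finset.sum_congr rfl fun j _ => by ring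
    · refine Finset.sum_congr rfl fun i _ => ?_
      rw [← mul_assoc, sign_mul_self_eq_abs, ← Finset.sum_mul, mul_comm]
  have hsum : 0 ≤ ∑ j, ∑ i, r j i * (Real.sign (x i) * x j - |x j|) := by
    rw [hpair]
    refine Finset.sum_nonneg fun i _ => sign_mul_nonneg ?_
    by_cases hi : i ∈ A
    · exact hxy i hi
    · simp [hx i hi]
  have hzero : ∀ j i, r j i * (Real.sign (x i) * x j - |x j|) = 0 := by
    have hrow : ∀ j, ∑ i, r j i * (Real.sign (x i) * x j - |x j|) ≤ 0 := fun j =>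
      Finset.sum_nonpos fun i _ => hterm j i
    have h0 := le_antisymm (Finset.sum_nonpos fun j _ => hrow j) hsum
    intro j i
    have hj := (Finset.sum_eq_zero_iff_of_nonpos fun j _ => hrow j).1 h0 j (Finset.mem_univ j)
    exact (Finset.sum_eq_zero_iff_of_nonpos fun i _ => hterm j i).1 hj i (Finset.mem_univ i)
  have hstep : ∀ j i, 0 < r j i → x j ≠ 0 → x i ≠ 0 := by
    intro j i hji hj hi
    have h := hzero j i
    simp [hi, hji.ne', hj] at h
  obtain ⟨k, hk⟩ : ∃ k, k ∉ A := by
    by_contra! h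
    exact hA (Finset.eq_univ_iff_forall.2 h)
  by_contra hj
  have hjk : j ≠ k := by
    rintro rfl
    exact hj (hx _ hk)
  have hreach : ∀ i, Relation.TransGen (fun a c => 0 < r a c) j i → x i ≠ 0 := by
    intro i h
    induction h with
    | single h => exact hstep _ _ h hj
    | tail _ h ih => exact hstep _ _ h ih
  exact hreach k (hirr j k hjk) (hx k hk)

/-- Coordinate `i` of a point of the span attached to `D`, with both sums written over all
of `S`. -/
theorem cone_apply (r : S → S → ℝ) (A D : Finset S) (α : S → ℝ) (i : S) (hi : i ∈ A) :
    ((∑ j ∈ D, α j • wproj r A j) + (∑ k ∈ A \ D, α k • eA A k)) ⟨i, hi⟩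
      = ∑ j, (if j ∈ D then α j else 0) * vvec r j i + (if i ∈ D then 0 else α i) := by
  simp only [Pi.add_apply, Finset.sum_apply, Pi.smul_apply, smul_eq_mul, wproj, eA, ite_mul,
    zero_mul, mul_ite, mul_one, mul_zero, Finset.sum_ite_mem, Finset.univ_inter,
    Finset.sum_ite_eq, Finset.mem_sdiff, hi, true_and]
  by_cases h : i ∈ D <;> simp [h]

/-- two representations of the same vector of ℝ^A along two different
cones have equal coefficients, and the coefficients on the symmetric difference vanish. -/
theorem statement18
    (S : Type) [Fintype S] [DecidableEq S] (hS : 2 ≤ Fintype.card S)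
    (r : S → S → ℝ) (hr : ∀ j k, 0 ≤ r j k) (hrdiag : ∀ j, r j j = 0)
    (hirr : IrreducibleRates r)
    (A : Finset S) (hAne : A.Nonempty) (hAproper : A ≠ Finset.univ)
    (D D' : Finset S) (hD : D ⊆ A) (hD' : D' ⊆ A) (hne : D ≠ D')
    (α β : S → ℝ) (hsign : ∀ j ∈ A, 0 ≤ α j * β j)
    (heq : (∑ j ∈ D, α j • wproj r A j) + (∑ k ∈ A \ D, α k • eA A k)
         = (∑ j ∈ D', β j • wproj r A j) + (∑ k ∈ A \ D', β k • eA A k)) :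
    (∀ j ∈ A, α j = β j) ∧
    (∀ k ∈ (D \ D') ∪ (D' \ D), α k = 0 ∧ β k = 0) := by
  set x : S → ℝ := fun j => (if j ∈ D then α j else 0) - (if j ∈ D' then β j else 0) with hxdef
  have hy : ∀ i ∈ A, ∑ j, x j * vvec r j i
      = (if i ∈ D' then 0 else β i) - (if i ∈ D then 0 else α i) := by
    intro i hi
    have h := congrFun heq ⟨i, hi⟩
    rw [cone_apply, cone_apply] at h
    simp only [hxdef, sub_mul, Finset.sum_sub_distrib]
    linarith
  have hx : ∀ j, x j = 0 := by
    refine eq_zero_of_mul_nonneg r hr hirr A hAproper x ?_ ?_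
    · intro i hi
      have h : i ∉ D := fun h => hi (hD h)
      have h' : i ∉ D' := fun h => hi (hD' h)
      simp [hxdef, h, h']
    · intro i hi
      rw [hy i hi]
      have hs := hsign i hi
      by_cases h : i ∈ D <;> by_cases h' : i ∈ D' <;> simp [hxdef, h, h'] <;> linarith
  have hy0 : ∀ i ∈ A, (if i ∈ D' then 0 else β i) - (if i ∈ D then 0 else α i) = 0 := by
    intro i hi
    simp [← hy i hi, hx]
  refine ⟨fun j hj => ?_, fun k hk => ?_⟩
  · have h1 := hx j
    have h2 := hy0 j hj
    by_cases h : j ∈ D <;> by_cases h' : j ∈ D' <;> simp [hxdef, h, h'] at h1 h2 <;> linarith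
  · have h1 := hx k
    simp only [Finset.mem_union, Finset.mem_sdiff] at hk
    rcases hk with ⟨h, h'⟩ | ⟨h, h'⟩
    · have h2 := hy0 k (hD h)
      simp [hxdef, h, h'] at h1 h2
      exact ⟨h1, h2⟩
    · have h2 := hy0 k (hD' h)
      simp [hxdef, h, h'] at h1 h2
      exact ⟨h2, h1⟩
end
end
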